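/- arXiv:1812.08894 — 2 statements merged into one kernel-verified Lean document; each statement's English description precedes it below -/
import Mathlib

section
/- Fix n ≥ 1 and ε > 0, and let u : ℝⁿ × [0,∞) → ℝ be a smooth solution of ∂ₜu = Δu − (1/ε²) f(u) with f(u) = 2u(u²−1), |u| ≤ 1, such that for every T > 0 the function u and its spatial derivatives up to third order and its time derivative are uniformly bounded on ℝⁿ × [0,T]. Let μᵗ denote the measure with density (ε/2)|∇u(x,t)|² + (1/ε)F(u(x,t)) with respect to Lebesgue measure, F(u) = (1/2)(1−u²)². Assume (ε/2)|∇u(x,t)|² ≤ (1/ε)F(u(x,t)) for all x ∈ ℝⁿ and t ≥ 0. Then the entropy is nonincreasing along the flow: for all 0 ≤ t₁ ≤ t₂, λ(μ^{t₂}) ≤ λ(μ^{t₁}). -/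
open Real MeasureTheory Metric ENNReal

/-- The Laplacian of `f : ℝⁿ → ℝ` at `x`, as the sum of the second partial derivatives in
the coordinate directions. -/
noncomputable def spaceLaplacian (n : ℕ) (f : EuclideanSpace ℝ (Fin n) → ℝ)
    (x : EuclideanSpace ℝ (Fin n)) : ℝ :=
  ∑ i : Fin n,
    fderiv ℝ (fun y => fderiv ℝ f y (EuclideanSpace.single i (1 : ℝ))) x
      (EuclideanSpace.single i (1 : ℝ))

/-- The (n-1)-dimensional Gaussian density `(4πs)^{-(n-1)/2} exp(-|x-y|²/(4s))` on `ℝⁿ`. -/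
noncomputable def gaussianDensity (n : ℕ) (y : EuclideanSpace ℝ (Fin n)) (s : ℝ)
    (x : EuclideanSpace ℝ (Fin n)) : ℝ :=
  (4 * Real.pi * s) ^ (-(((n : ℝ) - 1) / 2)) * Real.exp (-(dist x y) ^ 2 / (4 * s))

/-- The (mean curvature flow) entropy of a measure on `ℝⁿ`:
`λ(μ) = sup_{y ∈ ℝⁿ, s > 0} ∫ (4πs)^{-(n-1)/2} exp(-|x-y|²/(4s)) dμ(x)`. -/
noncomputable def entropy (n : ℕ) (μ : Measure (EuclideanSpace ℝ (Fin n))) : ℝ≥0∞ :=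
  ⨆ (y : EuclideanSpace ℝ (Fin n)) (s : ℝ) (_ : 0 < s),
    ∫⁻ x, ENNReal.ofReal (gaussianDensity n y s x) ∂μ

/-!
Fix `(y, τ)` and let `ρ` be the Gaussian of scale `s = τ - t` centred at `y`, with `a = 1 / (2 s)`.
Let `e` be the energy density, `ξ = ε/2 |∇u|² - F(u)/ε` the discrepancy, and
`w = ∂ₜu - a (x - y) · ∇u`. The equation makes the divergence of `ρ (a (x - y) e + ε w ∇u)` equal to
`∂ₜ(ρ e) - ρ (a ξ - ε w²)`, so `d/dt ∫ ρ e = ∫ ρ (a ξ - ε w²) ≤ 0` when `ξ ≤ 0`. Hence the Gaussian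
integral of scale `s` at time `t₂` is at most the one of scale `s + t₂ - t₁` at time `t₁`, and the
supremum over `(y, s)` can only decrease.
-/

section DirectionalDerivatives

variable {V W : Type*} [NormedAddCommGroup V] [NormedSpace ℝ V] [NormedAddCommGroup W]
  [NormedSpace ℝ W]

lemma fderiv_fderiv_apply_comm {g : V → W} (hg : ContDiff ℝ 2 g) (q v w : V) :
    fderiv ℝ (fun q => fderiv ℝ g q v) q w = fderiv ℝ (fun q => fderiv ℝ g q w) q v := by
  have hdiff : DifferentiableAt ℝ (fderiv ℝ g) q :=
    (hg.fderiv_right (m := 1) (by norm_num)).differentiable one_ne_zero q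
  have hsymm : IsSymmSndFDerivAt ℝ g q := hg.contDiffAt.isSymmSndFDerivAt (by simp)
  rw [fderiv_clm_apply hdiff (differentiableAt_const v),
    fderiv_clm_apply hdiff (differentiableAt_const w)]
  simpa using hsymm.eq w v

lemma norm_iteratedFDeriv_fderiv_apply_le {g : V → W} {k : ℕ} (hg : ContDiff ℝ (k + 1) g)
    (x v : V) :
    ‖iteratedFDeriv ℝ k (fun x => fderiv ℝ g x v) x‖ ≤ ‖v‖ * ‖iteratedFDeriv ℝ (k + 1) g x‖ := by
  rw [← norm_iteratedFDeriv_fderiv]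
  exact norm_iteratedFDeriv_clm_apply_const (hg.fderiv_right le_rfl).contDiffAt le_rfl

end DirectionalDerivatives

section SpaceTime

open Function

variable {n : ℕ}

/-- The partial derivative `∂ᵢg` in the `i`-th space coordinate of a function `g x t` on
space-time. -/
noncomputable def spaceDeriv (i : Fin n) (g : EuclideanSpace ℝ (Fin n) → ℝ → ℝ)
    (x : EuclideanSpace ℝ (Fin n)) (t : ℝ) : ℝ :=
  fderiv ℝ (fun y => g y t) x (EuclideanSpace.single i 1)

/-- The time derivative `∂ₜg` of a function `g x t` on space-time. -/
noncomputable def timeDeriv (g : EuclideanSpace ℝ (Fin n) → ℝ → ℝ)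
    (x : EuclideanSpace ℝ (Fin n)) (t : ℝ) : ℝ :=
  deriv (g x) t

variable {g : EuclideanSpace ℝ (Fin n) → ℝ → ℝ}

lemma spaceDeriv_eq_fderiv_uncurry (hg : Differentiable ℝ (uncurry g)) (i : Fin n)
    (x : EuclideanSpace ℝ (Fin n)) (t : ℝ) :
    spaceDeriv i g x t = fderiv ℝ (uncurry g) (x, t) (EuclideanSpace.single i 1, 0) := by
  have hslice := HasFDerivAt.comp (f := fun y => (y, t)) x (hg (x, t)).hasFDerivAt
    (hasFDerivAt_prodMk_left x t)
  exact DFunLike.congr_fun hslice.fderiv _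

lemma hasDerivAt_timeDeriv (hg : Differentiable ℝ (uncurry g))
    (x : EuclideanSpace ℝ (Fin n)) (t : ℝ) : HasDerivAt (g x) (timeDeriv g x t) t :=
  (hg.comp (g := uncurry g) (f := fun t => (x, t)) (by fun_prop)).differentiableAt.hasDerivAt

lemma timeDeriv_eq_fderiv_uncurry (hg : Differentiable ℝ (uncurry g))
    (x : EuclideanSpace ℝ (Fin n)) (t : ℝ) :
    timeDeriv g x t = fderiv ℝ (uncurry g) (x, t) (0, 1) := by
  have hslice := (hg (x, t)).hasFDerivAt.comp t (hasFDerivAt_prodMk_right x t)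
  exact hslice.hasDerivAt.deriv

lemma contDiff_spaceDeriv {m k : WithTop ℕ∞} (hg : ContDiff ℝ k (uncurry g)) (hmk : m + 1 ≤ k)
    (i : Fin n) : ContDiff ℝ m (uncurry (spaceDeriv i g)) := by
  have hdiff := hg.differentiable (zero_lt_one.trans_le (le_add_self.trans hmk)).ne'
  have heq : uncurry (spaceDeriv i g) = _ :=
    funext fun q => spaceDeriv_eq_fderiv_uncurry hdiff i q.1 q.2
  rw [heq]
  exact (hg.fderiv_right hmk).clm_apply contDiff_const

lemma contDiff_timeDeriv {m k : WithTop ℕ∞} (hg : ContDiff ℝ k (uncurry g)) (hmk : m + 1 ≤ k) :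
    ContDiff ℝ m (uncurry (timeDeriv g)) := by
  have hdiff := hg.differentiable (zero_lt_one.trans_le (le_add_self.trans hmk)).ne'
  have heq : uncurry (timeDeriv g) = _ :=
    funext fun q => timeDeriv_eq_fderiv_uncurry hdiff q.1 q.2
  rw [heq]
  exact (hg.fderiv_right hmk).clm_apply contDiff_const

lemma contDiff_slice {k : WithTop ℕ∞} (hg : ContDiff ℝ k (uncurry g)) (t : ℝ) :
    ContDiff ℝ k (fun x => g x t) :=
  hg.comp (g := uncurry g) (contDiff_prodMk_left t)

lemma spaceDeriv_comm (hg : ContDiff ℝ 2 (uncurry g)) (i j : Fin n)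
    (x : EuclideanSpace ℝ (Fin n)) (t : ℝ) :
    spaceDeriv i (spaceDeriv j g) x t = spaceDeriv j (spaceDeriv i g) x t :=
  fderiv_fderiv_apply_comm (contDiff_slice hg t) x _ _

lemma timeDeriv_spaceDeriv_comm (hg : ContDiff ℝ 2 (uncurry g)) (i : Fin n)
    (x : EuclideanSpace ℝ (Fin n)) (t : ℝ) :
    timeDeriv (spaceDeriv i g) x t = spaceDeriv i (timeDeriv g) x t := by
  have hdiff : Differentiable ℝ (uncurry g) := hg.differentiable two_ne_zero
  have hspace : uncurry (spaceDeriv i g) = _ :=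
    funext fun q => spaceDeriv_eq_fderiv_uncurry hdiff i q.1 q.2
  have htime : uncurry (timeDeriv g) = _ :=
    funext fun q => timeDeriv_eq_fderiv_uncurry hdiff q.1 q.2
  rw [timeDeriv_eq_fderiv_uncurry
      ((contDiff_spaceDeriv hg (m := 1) (by norm_num) i).differentiable one_ne_zero),
    spaceDeriv_eq_fderiv_uncurry
      ((contDiff_timeDeriv hg (m := 1) (by norm_num)).differentiable one_ne_zero),
    hspace, htime]
  exact fderiv_fderiv_apply_comm hg _ _ _

lemma norm_gradient_sq (t : ℝ) (x : EuclideanSpace ℝ (Fin n)) :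
    ‖gradient (fun y => g y t) x‖ ^ 2 = ∑ i, spaceDeriv i g x t ^ 2 := by
  rw [EuclideanSpace.real_norm_sq_eq]
  refine Finset.sum_congr rfl fun i _ => ?_
  rw [spaceDeriv, ← inner_gradient_left, EuclideanSpace.inner_single_right]
  simp

end SpaceTime

section PolynomialGrowth

variable {V : Type*} [NormedAddCommGroup V]

/-- The algebra of functions on space-time that, for times in `I`, are continuous in space and grow
at most polynomially in the distance to the centre `y`, uniformly in time. -/
def polyGrowth (y : V) (I : Set ℝ) : Subalgebra ℝ (V → ℝ → ℝ) where
  carrier := {g | (∀ t ∈ I, Continuous fun x => g x t) ∧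
    ∃ C : ℝ, 0 ≤ C ∧ ∃ k : ℕ, ∀ x, ∀ t ∈ I, |g x t| ≤ C * (1 + ‖x - y‖) ^ k}
  mul_mem' := by
    rintro g h ⟨hg_cont, C, hC, k, hg⟩ ⟨hh_cont, D, hD, l, hh⟩
    refine ⟨fun t ht => (hg_cont t ht).mul (hh_cont t ht), C * D, by positivity, k + l,
      fun x t ht => ?_⟩
    calc |g x t * h x t| = |g x t| * |h x t| := abs_mul _ _
      _ ≤ (C * (1 + ‖x - y‖) ^ k) * (D * (1 + ‖x - y‖) ^ l) := by
        gcongr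
        exacts [hg x t ht, hh x t ht]
      _ = C * D * (1 + ‖x - y‖) ^ (k + l) := by ring
  add_mem' := by
    rintro g h ⟨hg_cont, C, hC, k, hg⟩ ⟨hh_cont, D, hD, l, hh⟩
    refine ⟨fun t ht => (hg_cont t ht).add (hh_cont t ht), C + D, by positivity, k + l,
      fun x t ht => ?_⟩
    have hone : 1 ≤ 1 + ‖x - y‖ := le_add_of_nonneg_right (norm_nonneg _)
    calc |g x t + h x t| ≤ |g x t| + |h x t| := abs_add_le _ _
      _ ≤ C * (1 + ‖x - y‖) ^ k + D * (1 + ‖x - y‖) ^ l := add_le_add (hg x t ht) (hh x t ht)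
      _ ≤ C * (1 + ‖x - y‖) ^ (k + l) + D * (1 + ‖x - y‖) ^ (k + l) := by
        gcongr <;> first | exact hone | omega
      _ = (C + D) * (1 + ‖x - y‖) ^ (k + l) := by ring
  algebraMap_mem' r := ⟨fun _ _ => continuous_const, |r|, abs_nonneg r, 0, fun x t _ => by simp⟩

variable {y : V} {I : Set ℝ} {g h : V → ℝ → ℝ}

lemma mem_polyGrowth_of_abs_le {C : ℝ} (hcont : ∀ t ∈ I, Continuous fun x => g x t)
    (hg : ∀ x, ∀ t ∈ I, |g x t| ≤ C) : g ∈ polyGrowth y I :=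
  ⟨hcont, |C|, abs_nonneg C, 0, fun x t ht => by simpa using (hg x t ht).trans (le_abs_self C)⟩

lemma mem_polyGrowth_congr (hgh : ∀ x, ∀ t ∈ I, g x t = h x t) (hh : h ∈ polyGrowth y I) :
    g ∈ polyGrowth y I := by
  obtain ⟨hcont, C, hC, k, hle⟩ := hh
  exact ⟨fun t ht => (funext fun x => hgh x t ht : (fun x => g x t) = fun x => h x t) ▸ hcont t ht,
    C, hC, k, fun x t ht => hgh x t ht ▸ hle x t ht⟩

lemma const_mem_polyGrowth (c : ℝ) : (fun _ _ => c) ∈ polyGrowth y I :=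
  (polyGrowth y I).algebraMap_mem c

lemma sum_mem_polyGrowth {ι : Type*} {s : Finset ι} {G : ι → V → ℝ → ℝ}
    (hG : ∀ i ∈ s, G i ∈ polyGrowth y I) : (fun x t => ∑ i ∈ s, G i x t) ∈ polyGrowth y I := by
  simpa only [Finset.sum_fn] using sum_mem hG

lemma norm_sub_mem_polyGrowth : (fun x _ => ‖x - y‖) ∈ polyGrowth y I :=
  ⟨fun _ _ => by fun_prop, 1, zero_le_one, 1, fun x t _ => by simp⟩

lemma coord_mem_polyGrowth {n : ℕ} {y : EuclideanSpace ℝ (Fin n)} (i : Fin n) :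
    (fun x _ => (x - y) i) ∈ polyGrowth y I :=
  ⟨fun _ _ => by fun_prop, 1, zero_le_one, 1, fun x t _ => by
    simpa using (PiLp.norm_apply_le (x - y) i).trans (le_add_of_nonneg_left zero_le_one)⟩

end PolynomialGrowth

section Gaussian

variable {n : ℕ}

lemma integrable_exp_neg_mul_norm_sub_sq {V : Type*} [NormedAddCommGroup V]
    [InnerProductSpace ℝ V] [FiniteDimensional ℝ V] [MeasurableSpace V] [BorelSpace V]
    (y : V) {b : ℝ} (hb : 0 < b) : Integrable fun x : V => exp (-b * ‖x - y‖ ^ 2) := by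
  have hcentred : Integrable fun x : V => exp (-b * ‖x‖ ^ 2) := by
    refine (GaussianFourier.integrable_cexp_neg_mul_sq_norm_add (V := V) (b := b)
      (by simpa using hb) 0 0).norm.congr (.of_forall fun x => ?_)
    simp [Complex.norm_exp, ← Complex.ofReal_pow]
  exact hcentred.comp_sub_right y

lemma one_add_pow_mul_exp_neg_mul_sq_le (k : ℕ) {b r : ℝ} (hb : 0 < b) (hr : 0 ≤ r) :
    (1 + r) ^ k * exp (-b * r ^ 2) ≤
      k.factorial * exp (1 + 1 / (2 * b)) * exp (-(b / 2) * r ^ 2) := by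
  have hpow : (1 + r) ^ k ≤ k.factorial * exp (1 + r) :=
    (div_le_iff₀' (by positivity)).mp (pow_div_factorial_le_exp (1 + r) (by positivity) k)
  have hyoung : r ≤ 1 / (2 * b) + b / 2 * r ^ 2 := by
    have hsq : 1 / (2 * b) + b / 2 * r ^ 2 - r = (b * r - 1) ^ 2 / (2 * b) := by
      field_simp
      ring
    have : 0 ≤ (b * r - 1) ^ 2 / (2 * b) := by positivity
    linarith
  calc (1 + r) ^ k * exp (-b * r ^ 2)
      ≤ k.factorial * exp (1 + r) * exp (-b * r ^ 2) := by gcongr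
    _ = k.factorial * exp (1 + r - b * r ^ 2) := by
      rw [mul_assoc, ← exp_add, neg_mul, sub_eq_add_neg]
    _ ≤ k.factorial * exp (1 + 1 / (2 * b) + -(b / 2) * r ^ 2) := by
      gcongr
      linarith
    _ = k.factorial * exp (1 + 1 / (2 * b)) * exp (-(b / 2) * r ^ 2) := by
      rw [exp_add (1 + 1 / (2 * b)), mul_assoc]

lemma gaussianDensity_nonneg (y : EuclideanSpace ℝ (Fin n)) {s : ℝ} (hs : 0 < s)
    (x : EuclideanSpace ℝ (Fin n)) : 0 ≤ gaussianDensity n y s x := by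
  unfold gaussianDensity
  positivity

lemma continuous_gaussianDensity (y : EuclideanSpace ℝ (Fin n)) (s : ℝ) :
    Continuous (gaussianDensity n y s) := by
  unfold gaussianDensity
  fun_prop

lemma hasFDerivAt_gaussianDensity (y : EuclideanSpace ℝ (Fin n)) (s : ℝ)
    (x : EuclideanSpace ℝ (Fin n)) :
    HasFDerivAt (gaussianDensity n y s)
      ((-(1 / (2 * s)) * gaussianDensity n y s x) • innerSL ℝ (x - y)) x := by
  have hsq := ((hasFDerivAt_id x).sub_const y).norm_sq
  have hexp := ((hsq.const_mul (-1 / (4 * s))).exp).const_mul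
    ((4 * π * s) ^ (-(((n : ℝ) - 1) / 2)))
  have heq : gaussianDensity n y s = fun x => (4 * π * s) ^ (-(((n : ℝ) - 1) / 2)) *
      exp (-1 / (4 * s) * ‖id x - y‖ ^ 2) := by
    funext x
    simp only [gaussianDensity, dist_eq_norm, id]
    ring_nf
  rw [heq]
  refine hexp.congr_fderiv (ContinuousLinearMap.ext fun v => ?_)
  simp only [smul_apply, ContinuousLinearMap.comp_apply, smul_eq_mul,
    ContinuousLinearMap.id_apply, nsmul_eq_mul, id]
  push_cast
  ring

/-- The logarithmic derivative of `gaussianDensity n y s x` with respect to the scale `s`. -/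
noncomputable def gaussianLogDeriv (y : EuclideanSpace ℝ (Fin n)) (s : ℝ)
    (x : EuclideanSpace ℝ (Fin n)) : ℝ :=
  ‖x - y‖ ^ 2 * (1 / (2 * s)) ^ 2 - ((n : ℝ) - 1) * (1 / (2 * s))

lemma hasDerivAt_gaussianDensity_scale (y x : EuclideanSpace ℝ (Fin n)) {s : ℝ} (hs : 0 < s) :
    HasDerivAt (fun s => gaussianDensity n y s x)
      (gaussianDensity n y s x * gaussianLogDeriv y s x) s := by
  have hlin (c : ℝ) : HasDerivAt (fun s => c * s) c s := by
    simpa using (hasDerivAt_id s).const_mul c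
  have hpow := (hlin (4 * π)).rpow_const (p := -(((n : ℝ) - 1) / 2)) (.inl (by positivity))
  have hexp := ((hasDerivAt_const s (-dist x y ^ 2)).fun_div (hlin 4) (by positivity)).exp
  convert! hpow.fun_mul hexp using 1
  rw [rpow_sub_one (by positivity), gaussianDensity, gaussianLogDeriv, dist_eq_norm]
  field_simp
  ring

lemma exists_gaussianDensity_le (y : EuclideanSpace ℝ (Fin n)) {s S : ℝ} (hs : 0 < s) :
    ∃ C, ∀ σ ∈ Set.Icc s S, ∀ x,
      gaussianDensity n y σ x ≤ C * exp (-(1 / (4 * S)) * ‖x - y‖ ^ 2) := by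
  have hcont : ContinuousOn (fun σ : ℝ => (4 * π * σ) ^ (-(((n : ℝ) - 1) / 2))) (Set.Icc s S) :=
    ContinuousOn.rpow_const (by fun_prop) fun σ hσ =>
      .inl (mul_pos (by positivity) (hs.trans_le hσ.1)).ne'
  obtain ⟨C, hC⟩ := isCompact_Icc.exists_bound_of_continuousOn hcont
  refine ⟨C, fun σ hσ x => ?_⟩
  have hσ_pos : 0 < σ := hs.trans_le hσ.1
  have hexponent : -dist x y ^ 2 / (4 * σ) ≤ -(1 / (4 * S)) * ‖x - y‖ ^ 2 := by
    rw [dist_eq_norm, neg_div, neg_mul, neg_le_neg_iff, one_div_mul_eq_div]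
    gcongr
    exact hσ.2
  exact mul_le_mul ((le_norm_self _).trans (hC σ hσ)) (exp_le_exp.mpr hexponent) (exp_nonneg _)
    ((norm_nonneg _).trans (hC σ hσ))

lemma gaussianLogDeriv_mem_polyGrowth (y : EuclideanSpace ℝ (Fin n)) {t₁ t₂ τ : ℝ} (hτ : t₂ < τ) :
    (fun x t => gaussianLogDeriv y (τ - t) x) ∈ polyGrowth y (Set.Icc t₁ t₂) := by
  have hrate : (fun (_ : EuclideanSpace ℝ (Fin n)) t => 1 / (2 * (τ - t))) ∈
      polyGrowth y (Set.Icc t₁ t₂) := by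
    refine mem_polyGrowth_of_abs_le (C := 1 / (2 * (τ - t₂))) (fun _ _ => continuous_const)
      fun _ t ht => ?_
    have hτ₂ : 0 < τ - t₂ := sub_pos.mpr hτ
    have hτt : τ - t₂ ≤ τ - t := sub_le_sub_left ht.2 τ
    rw [abs_of_nonneg (by have := hτ₂.trans_le hτt; positivity)]
    gcongr
  exact sub_mem (mul_mem (pow_mem norm_sub_mem_polyGrowth 2) (pow_mem hrate 2))
    (mul_mem (const_mem_polyGrowth _) hrate)

variable {y : EuclideanSpace ℝ (Fin n)} {I : Set ℝ} {g : EuclideanSpace ℝ (Fin n) → ℝ → ℝ}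

lemma exists_integrable_bound_gaussianDensity_mul (hg : g ∈ polyGrowth y I) {s S : ℝ}
    (hs : 0 < s) (hsS : s ≤ S) :
    ∃ B : EuclideanSpace ℝ (Fin n) → ℝ, Integrable B ∧
      ∀ x, ∀ t ∈ I, ∀ σ ∈ Set.Icc s S, |gaussianDensity n y σ x * g x t| ≤ B x := by
  obtain ⟨-, C, hC, k, hgC⟩ := hg
  obtain ⟨D, hD⟩ := exists_gaussianDensity_le y hs (S := S)
  have hb : 0 < 1 / (4 * S) := by have := hs.trans_le hsS; positivity
  refine ⟨fun x => C * D * (k.factorial * exp (1 + 1 / (2 * (1 / (4 * S))))) *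
      exp (-(1 / (4 * S) / 2) * ‖x - y‖ ^ 2),
    (integrable_exp_neg_mul_norm_sub_sq y (half_pos hb)).const_mul _, fun x t ht σ hσ => ?_⟩
  have hρ := gaussianDensity_nonneg y (hs.trans_le hσ.1) x
  have hD_nonneg : 0 ≤ D := nonneg_of_mul_nonneg_left (hρ.trans (hD σ hσ x)) (exp_pos _)
  calc |gaussianDensity n y σ x * g x t| = gaussianDensity n y σ x * |g x t| := by
        rw [abs_mul, abs_of_nonneg hρ]
    _ ≤ D * exp (-(1 / (4 * S)) * ‖x - y‖ ^ 2) * (C * (1 + ‖x - y‖) ^ k) := by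
        gcongr
        exacts [hD σ hσ x, hgC x t ht]
    _ = C * D * ((1 + ‖x - y‖) ^ k * exp (-(1 / (4 * S)) * ‖x - y‖ ^ 2)) := by ring
    _ ≤ C * D * (k.factorial * exp (1 + 1 / (2 * (1 / (4 * S)))) *
          exp (-(1 / (4 * S) / 2) * ‖x - y‖ ^ 2)) :=
        mul_le_mul_of_nonneg_left
          (one_add_pow_mul_exp_neg_mul_sq_le k hb (norm_nonneg (x - y))) (by positivity)
    _ = _ := by ring

lemma integrable_gaussianDensity_mul (hg : g ∈ polyGrowth y I) {t : ℝ} (ht : t ∈ I) {s : ℝ}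
    (hs : 0 < s) : Integrable fun x => gaussianDensity n y s x * g x t := by
  obtain ⟨B, hB, hgB⟩ := exists_integrable_bound_gaussianDensity_mul hg hs le_rfl
  exact hB.mono' ((continuous_gaussianDensity y s).mul (hg.1 t ht)).aestronglyMeasurable
    (.of_forall fun x => hgB x t ht s (Set.left_mem_Icc.mpr le_rfl))

lemma integral_gaussianDensity_mul_spaceDeriv {i : Fin n} (hg : g ∈ polyGrowth y I)
    (hg' : spaceDeriv i g ∈ polyGrowth y I) {t : ℝ} (ht : t ∈ I)
    (hdiff : Differentiable ℝ fun x => g x t) {s : ℝ} (hs : 0 < s) :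
    ∫ x, gaussianDensity n y s x * spaceDeriv i g x t =
      ∫ x, gaussianDensity n y s x * (1 / (2 * s) * ((x - y) i * g x t)) := by
  have hgaussian (x : EuclideanSpace ℝ (Fin n)) :
      fderiv ℝ (gaussianDensity n y s) x (EuclideanSpace.single i 1) * g x t =
        -(gaussianDensity n y s x * (1 / (2 * s) * ((x - y) i * g x t))) := by
    rw [(hasFDerivAt_gaussianDensity y s x).fderiv, smul_apply, innerSL_apply_apply,
      EuclideanSpace.inner_single_right, conj_trivial, smul_eq_mul]
    ring
  have hcoord : (fun x t => 1 / (2 * s) * ((x - y) i * g x t)) ∈ polyGrowth y I :=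
    mul_mem (const_mem_polyGrowth _) (mul_mem (coord_mem_polyGrowth i) hg)
  have hparts := integral_mul_fderiv_eq_neg_fderiv_mul_of_integrable
    (f := gaussianDensity n y s) (g := fun x => g x t) (v := EuclideanSpace.single i 1)
    (by simpa only [hgaussian] using (integrable_gaussianDensity_mul hcoord ht hs).fun_neg)
    (integrable_gaussianDensity_mul hg' ht hs) (integrable_gaussianDensity_mul hg ht hs)
    (fun x _ => (hasFDerivAt_gaussianDensity y s x).differentiableAt) (fun x _ => hdiff x)
  exact hparts.trans (by simp only [hgaussian, integral_neg, neg_neg])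

lemma integral_gaussianDensity_mul_divergence {X : Fin n → EuclideanSpace ℝ (Fin n) → ℝ → ℝ}
    (hX : ∀ i, X i ∈ polyGrowth y I) (hX' : ∀ i, spaceDeriv i (X i) ∈ polyGrowth y I) {t : ℝ}
    (ht : t ∈ I) (hdiff : ∀ i, Differentiable ℝ fun x => X i x t) {s : ℝ} (hs : 0 < s) :
    ∫ x, gaussianDensity n y s x *
      ∑ i, (spaceDeriv i (X i) x t - 1 / (2 * s) * ((x - y) i * X i x t)) = 0 := by
  have hcoord (i : Fin n) : (fun x t => 1 / (2 * s) * ((x - y) i * X i x t)) ∈ polyGrowth y I :=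
    mul_mem (const_mem_polyGrowth _) (mul_mem (coord_mem_polyGrowth i) (hX i))
  have hint (i : Fin n) := integrable_gaussianDensity_mul (hX' i) ht hs
  have hint_coord (i : Fin n) := integrable_gaussianDensity_mul (hcoord i) ht hs
  simp only [Finset.mul_sum, mul_sub]
  refine (integral_finsetSum _ fun i _ => (hint i).sub (hint_coord i)).trans
    (Finset.sum_eq_zero fun i _ => ?_)
  rw [integral_sub' (hint i) (hint_coord i),
    integral_gaussianDensity_mul_spaceDeriv (hX i) (hX' i) ht (hdiff i) hs, sub_self]

end Gaussian

section ParametricIntegral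

lemma antitoneOn_integral_of_dominated {α : Type*} [MeasurableSpace α] {μ : Measure α}
    {f f' : ℝ → α → ℝ} {B B' : α → ℝ} {a b : ℝ}
    (hf : ∀ t ∈ Set.Icc a b, AEStronglyMeasurable (f t) μ)
    (hf' : ∀ t ∈ Set.Ioo a b, AEStronglyMeasurable (f' t) μ)
    (hfB : ∀ x, ∀ t ∈ Set.Icc a b, |f t x| ≤ B x) (hB : Integrable B μ)
    (hfB' : ∀ x, ∀ t ∈ Set.Icc a b, |f' t x| ≤ B' x) (hB' : Integrable B' μ)
    (hderiv : ∀ x, ∀ t ∈ Set.Icc a b, HasDerivAt (fun t => f t x) (f' t x) t)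
    (hnonpos : ∀ t ∈ Set.Ioo a b, ∫ x, f' t x ∂μ ≤ 0) :
    AntitoneOn (fun t => ∫ x, f t x ∂μ) (Set.Icc a b) := by
  have hderiv_integral : ∀ t ∈ Set.Ioo a b,
      HasDerivAt (fun t => ∫ x, f t x ∂μ) (∫ x, f' t x ∂μ) t := fun t ht =>
    (hasDerivAt_integral_of_dominated_loc_of_deriv_le (Icc_mem_nhds ht.1 ht.2)
      (Filter.eventually_of_mem (Icc_mem_nhds ht.1 ht.2) hf)
      (hB.mono' (hf t ⟨ht.1.le, ht.2.le⟩)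
        (.of_forall fun x => hfB x t ⟨ht.1.le, ht.2.le⟩))
      (hf' t ht) (.of_forall hfB') hB' (.of_forall hderiv)).2
  have hcont : ContinuousOn (fun t => ∫ x, f t x ∂μ) (Set.Icc a b) :=
    continuousOn_of_dominated hf (fun t ht => .of_forall fun x => hfB x t ht) hB
      (.of_forall fun x t ht => (hderiv x t ht).continuousAt.continuousWithinAt)
  refine antitoneOn_of_deriv_nonpos (convex_Icc a b) hcont ?_ ?_ <;>
    rw [interior_Icc] <;> intro t ht
  · exact (hderiv_integral t ht).differentiableAt.differentiableWithinAt
  · exact (hderiv_integral t ht).deriv ▸ hnonpos t ht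

end ParametricIntegral

section BoundedDerivatives

open Function

variable {n m : ℕ} {I : Set ℝ} {y : EuclideanSpace ℝ (Fin n)}
  {g : EuclideanSpace ℝ (Fin n) → ℝ → ℝ}

/-- The function `g x t` is `C^m` on space-time, and bounded together with its space derivatives up
to order `m`, uniformly for times in `I`. -/
structure HasBoundedSpaceDerivs (m : ℕ) (I : Set ℝ) (g : EuclideanSpace ℝ (Fin n) → ℝ → ℝ) :
    Prop where
  contDiff : ContDiff ℝ m (uncurry g)
  exists_norm_le : ∃ C : ℝ, ∀ x, ∀ t ∈ I, ∀ k ≤ m, ‖iteratedFDeriv ℝ k (fun y => g y t) x‖ ≤ C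

namespace HasBoundedSpaceDerivs

lemma spaceDeriv (hg : HasBoundedSpaceDerivs (m + 1) I g) (i : Fin n) :
    HasBoundedSpaceDerivs m I (spaceDeriv i g) := by
  obtain ⟨C, hC⟩ := hg.exists_norm_le
  refine ⟨contDiff_spaceDeriv hg.contDiff le_rfl i, C, fun x t ht k hk => ?_⟩
  have hslice : ContDiff ℝ (k + 1) fun x => g x t :=
    (contDiff_slice hg.contDiff t).of_le (by exact_mod_cast Nat.succ_le_succ hk)
  have hle := norm_iteratedFDeriv_fderiv_apply_le hslice x (EuclideanSpace.single i 1)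
  rw [PiLp.norm_single, norm_one, one_mul] at hle
  exact hle.trans (hC x t ht (k + 1) (Nat.succ_le_succ hk))

lemma comp_mem_polyGrowth (hg : HasBoundedSpaceDerivs m I g) {φ : ℝ → ℝ} (hφ : Continuous φ) :
    (fun x t => φ (g x t)) ∈ polyGrowth y I := by
  obtain ⟨C, hC⟩ := hg.exists_norm_le
  obtain ⟨D, hD⟩ := (isCompact_closedBall (0 : ℝ) C).exists_bound_of_continuousOn hφ.continuousOn
  exact mem_polyGrowth_of_abs_le (fun t _ => hφ.comp (contDiff_slice hg.contDiff t).continuous)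
    fun x t ht => hD _ (by simpa using hC x t ht 0 (Nat.zero_le m))

lemma mem_polyGrowth (hg : HasBoundedSpaceDerivs m I g) : g ∈ polyGrowth y I :=
  hg.comp_mem_polyGrowth continuous_id

end HasBoundedSpaceDerivs

end BoundedDerivatives

section SpaceDerivRules

variable {n : ℕ} {g h : EuclideanSpace ℝ (Fin n) → ℝ → ℝ} {x : EuclideanSpace ℝ (Fin n)} {t : ℝ}

lemma spaceDeriv_sub (hg : DifferentiableAt ℝ (fun x => g x t) x)
    (hh : DifferentiableAt ℝ (fun x => h x t) x) (i : Fin n) :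
    spaceDeriv i (fun x t => g x t - h x t) x t = spaceDeriv i g x t - spaceDeriv i h x t := by
  simp only [spaceDeriv, fderiv_fun_sub hg hh, sub_apply]

lemma spaceDeriv_add (hg : DifferentiableAt ℝ (fun x => g x t) x)
    (hh : DifferentiableAt ℝ (fun x => h x t) x) (i : Fin n) :
    spaceDeriv i (fun x t => g x t + h x t) x t = spaceDeriv i g x t + spaceDeriv i h x t := by
  simp only [spaceDeriv, fderiv_fun_add hg hh, add_apply]

lemma spaceDeriv_mul (hg : DifferentiableAt ℝ (fun x => g x t) x)
    (hh : DifferentiableAt ℝ (fun x => h x t) x) (i : Fin n) :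
    spaceDeriv i (fun x t => g x t * h x t) x t =
      g x t * spaceDeriv i h x t + h x t * spaceDeriv i g x t := by
  simp only [spaceDeriv, fderiv_fun_mul hg hh, add_apply, smul_apply, smul_eq_mul]

lemma spaceDeriv_const_mul (hg : DifferentiableAt ℝ (fun x => g x t) x) (c : ℝ) (i : Fin n) :
    spaceDeriv i (fun x t => c * g x t) x t = c * spaceDeriv i g x t := by
  simp only [spaceDeriv, fderiv_const_mul hg, smul_apply, smul_eq_mul]

lemma spaceDeriv_sum {ι : Type*} {s : Finset ι} {G : ι → EuclideanSpace ℝ (Fin n) → ℝ → ℝ}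
    (hG : ∀ j ∈ s, DifferentiableAt ℝ (fun x => G j x t) x) (i : Fin n) :
    spaceDeriv i (fun x t => ∑ j ∈ s, G j x t) x t = ∑ j ∈ s, spaceDeriv i (G j) x t := by
  simp only [spaceDeriv, fderiv_fun_sum hG, sum_apply]

lemma spaceDeriv_comp {φ : ℝ → ℝ} (hφ : DifferentiableAt ℝ φ (g x t))
    (hg : DifferentiableAt ℝ (fun x => g x t) x) (i : Fin n) :
    spaceDeriv i (fun x t => φ (g x t)) x t = deriv φ (g x t) * spaceDeriv i g x t := by
  have hcomp := (hφ.hasDerivAt.comp_hasFDerivAt x hg.hasFDerivAt).fderiv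
  exact DFunLike.congr_fun hcomp _

lemma spaceDeriv_coord (y : EuclideanSpace ℝ (Fin n)) (i j : Fin n) :
    spaceDeriv i (fun x _ => (x - y) j) x t = if i = j then 1 else 0 := by
  have hcoord : HasFDerivAt (fun x => (x - y) j)
      (EuclideanSpace.proj j : EuclideanSpace ℝ (Fin n) →L[ℝ] ℝ) x :=
    (EuclideanSpace.proj j : EuclideanSpace ℝ (Fin n) →L[ℝ] ℝ).hasFDerivAt.comp x
      ((hasFDerivAt_id x).sub_const y)
  rw [spaceDeriv, hcoord.fderiv]
  simp [eq_comm]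

end SpaceDerivRules

section Energy

open Function

variable {n : ℕ}

/-- The energy density `ε/2 |∇u|² + F(u)/ε` of `u` for the potential `F`. -/
noncomputable def energyDensity (ε : ℝ) (F : ℝ → ℝ) (u : EuclideanSpace ℝ (Fin n) → ℝ → ℝ)
    (x : EuclideanSpace ℝ (Fin n)) (t : ℝ) : ℝ :=
  ε / 2 * ‖gradient (fun y => u y t) x‖ ^ 2 + 1 / ε * F (u x t)

/-- The discrepancy `ε/2 |∇u|² - F(u)/ε`, which measures the failure of equipartition of energy. -/
noncomputable def discrepancy (ε : ℝ) (F : ℝ → ℝ) (u : EuclideanSpace ℝ (Fin n) → ℝ → ℝ)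
    (x : EuclideanSpace ℝ (Fin n)) (t : ℝ) : ℝ :=
  ε / 2 * ‖gradient (fun y => u y t) x‖ ^ 2 - 1 / ε * F (u x t)

/-- The derivative `∂ₜu - a (x - y) · ∇u` of `u` along the curves `x' = -a (x - y)`. With
`a = 1 / (2 (τ - t))` it vanishes exactly when `u` is invariant under the parabolic rescalings that
shrink space-time to the point `(y, τ)`. -/
noncomputable def selfSimilarDefect (a : ℝ) (y : EuclideanSpace ℝ (Fin n))
    (u : EuclideanSpace ℝ (Fin n) → ℝ → ℝ) (x : EuclideanSpace ℝ (Fin n)) (t : ℝ) : ℝ :=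
  timeDeriv u x t - a * ∑ i, (x - y) i * spaceDeriv i u x t

variable {ε : ℝ} {F : ℝ → ℝ} {u : EuclideanSpace ℝ (Fin n) → ℝ → ℝ}

lemma energyDensity_eq (x : EuclideanSpace ℝ (Fin n)) (t : ℝ) :
    energyDensity ε F u x t = ε / 2 * ∑ j, spaceDeriv j u x t ^ 2 + 1 / ε * F (u x t) := by
  rw [energyDensity, norm_gradient_sq]

lemma discrepancy_eq (x : EuclideanSpace ℝ (Fin n)) (t : ℝ) :
    discrepancy ε F u x t = ε / 2 * ∑ j, spaceDeriv j u x t ^ 2 - 1 / ε * F (u x t) := by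
  rw [discrepancy, norm_gradient_sq]

lemma contDiff_energyDensity (hF : ContDiff ℝ 1 F) (hu : ContDiff ℝ 2 (uncurry u)) :
    ContDiff ℝ 1 (uncurry (energyDensity ε F u)) := by
  have heq : uncurry (energyDensity ε F u) = fun q =>
      ε / 2 * ∑ j, uncurry (spaceDeriv j u) q ^ 2 + 1 / ε * F (uncurry u q) :=
    funext fun q => energyDensity_eq q.1 q.2
  have hspace (j : Fin n) := contDiff_spaceDeriv hu (m := 1) (by norm_num) j
  rw [heq]
  exact (contDiff_const.mul (.sum fun j _ => (hspace j).pow 2)).add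
    (contDiff_const.mul (hF.comp (hu.of_le one_le_two)))

lemma fderiv_uncurry_energyDensity (hF : Differentiable ℝ F) (hu : ContDiff ℝ 2 (uncurry u))
    (q v : EuclideanSpace ℝ (Fin n) × ℝ) :
    fderiv ℝ (uncurry (energyDensity ε F u)) q v =
      ε * ∑ j, uncurry (spaceDeriv j u) q * fderiv ℝ (uncurry (spaceDeriv j u)) q v +
        1 / ε * (deriv F (uncurry u q) * fderiv ℝ (uncurry u) q v) := by
  have heq : uncurry (energyDensity ε F u) = fun q =>
      ε / 2 * ∑ j, uncurry (spaceDeriv j u) q ^ 2 + 1 / ε * F (uncurry u q) :=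
    funext fun q => energyDensity_eq q.1 q.2
  have hspace (j : Fin n) : HasFDerivAt (uncurry (spaceDeriv j u)) _ q :=
    ((contDiff_spaceDeriv hu (m := 1) (by norm_num) j).differentiable one_ne_zero q).hasFDerivAt
  have hpotential := (hF (uncurry u q)).hasDerivAt.comp_hasFDerivAt q
    (hu.differentiable two_ne_zero q).hasFDerivAt
  have henergy := ((HasFDerivAt.fun_sum fun j (_ : j ∈ Finset.univ) => (hspace j).pow 2).const_mul
    (ε / 2)).add (hpotential.const_mul (1 / ε))
  rw [heq]
  refine (DFunLike.congr_fun henergy.fderiv v).trans ?_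
  simp only [add_apply, smul_apply, sum_apply, smul_eq_mul, Finset.mul_sum, nsmul_eq_mul]
  congr 1
  refine Finset.sum_congr rfl fun j _ => ?_
  push_cast
  ring

lemma spaceDeriv_energyDensity (hF : ContDiff ℝ 1 F) (hu : ContDiff ℝ 2 (uncurry u))
    (i : Fin n) (x : EuclideanSpace ℝ (Fin n)) (t : ℝ) :
    spaceDeriv i (energyDensity ε F u) x t =
      ε * ∑ j, spaceDeriv j u x t * spaceDeriv i (spaceDeriv j u) x t +
        1 / ε * (deriv F (u x t) * spaceDeriv i u x t) := by
  have hspace (j : Fin n) := contDiff_spaceDeriv hu (m := 1) (by norm_num) j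
  rw [spaceDeriv_eq_fderiv_uncurry ((contDiff_energyDensity hF hu).differentiable one_ne_zero),
    fderiv_uncurry_energyDensity (hF.differentiable one_ne_zero) hu,
    spaceDeriv_eq_fderiv_uncurry (hu.differentiable two_ne_zero)]
  simp only [spaceDeriv_eq_fderiv_uncurry ((hspace _).differentiable one_ne_zero) i,
    uncurry_apply_pair]

lemma timeDeriv_energyDensity (hF : ContDiff ℝ 1 F) (hu : ContDiff ℝ 2 (uncurry u))
    (x : EuclideanSpace ℝ (Fin n)) (t : ℝ) :
    timeDeriv (energyDensity ε F u) x t =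
      ε * ∑ j, spaceDeriv j u x t * spaceDeriv j (timeDeriv u) x t +
        1 / ε * (deriv F (u x t) * timeDeriv u x t) := by
  have hspace (j : Fin n) := contDiff_spaceDeriv hu (m := 1) (by norm_num) j
  rw [timeDeriv_eq_fderiv_uncurry ((contDiff_energyDensity hF hu).differentiable one_ne_zero),
    fderiv_uncurry_energyDensity (hF.differentiable one_ne_zero) hu,
    timeDeriv_eq_fderiv_uncurry (hu.differentiable two_ne_zero)]
  simp only [← timeDeriv_spaceDeriv_comm hu,
    timeDeriv_eq_fderiv_uncurry ((hspace _).differentiable one_ne_zero), uncurry_apply_pair]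

lemma contDiff_selfSimilarDefect (hu : ContDiff ℝ 2 (uncurry u)) (a : ℝ)
    (y : EuclideanSpace ℝ (Fin n)) : ContDiff ℝ 1 (uncurry (selfSimilarDefect a y u)) := by
  have hspace (i : Fin n) := contDiff_spaceDeriv hu (m := 1) (by norm_num) i
  have hcoord (i : Fin n) : ContDiff ℝ 1 fun q : EuclideanSpace ℝ (Fin n) × ℝ => (q.1 - y) i := by
    fun_prop
  exact (contDiff_timeDeriv hu (by norm_num)).sub
    (contDiff_const.mul (.sum fun i _ => (hcoord i).mul (hspace i)))

lemma spaceDeriv_selfSimilarDefect (hu : ContDiff ℝ 2 (uncurry u)) (a : ℝ)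
    (y : EuclideanSpace ℝ (Fin n)) (i : Fin n) (x : EuclideanSpace ℝ (Fin n)) (t : ℝ) :
    spaceDeriv i (selfSimilarDefect a y u) x t =
      spaceDeriv i (timeDeriv u) x t -
        a * (spaceDeriv i u x t + ∑ j, (x - y) j * spaceDeriv i (spaceDeriv j u) x t) := by
  have htime : Differentiable ℝ fun x => timeDeriv u x t :=
    (contDiff_slice (contDiff_timeDeriv hu (m := 1) (by norm_num)) t).differentiable one_ne_zero
  have hspace (j : Fin n) : Differentiable ℝ fun x => spaceDeriv j u x t :=
    (contDiff_slice (contDiff_spaceDeriv hu (m := 1) (by norm_num) j) t).differentiable one_ne_zero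
  have hterm (j : Fin n) : Differentiable ℝ fun x => (x - y) j * spaceDeriv j u x t := by
    fun_prop
  unfold selfSimilarDefect
  rw [spaceDeriv_sub (htime x) (by fun_prop), spaceDeriv_const_mul (by fun_prop),
    spaceDeriv_sum fun j _ => hterm j x]
  have hproduct (j : Fin n) : spaceDeriv i (fun x t => (x - y) j * spaceDeriv j u x t) x t =
      (x - y) j * spaceDeriv i (spaceDeriv j u) x t +
        if i = j then spaceDeriv j u x t else 0 := by
    rw [spaceDeriv_mul (g := fun x _ => (x - y) j) (by fun_prop) (hspace j x), spaceDeriv_coord,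
      mul_ite, mul_one, mul_zero]
  simp only [hproduct, Finset.sum_add_distrib, Finset.sum_ite_eq, Finset.mem_univ, if_true]
  ring

lemma timeDeriv_energyDensity_sub_drift (hF : ContDiff ℝ 1 F) (hu : ContDiff ℝ 2 (uncurry u))
    (a : ℝ) (y x : EuclideanSpace ℝ (Fin n)) (t : ℝ) :
    timeDeriv (energyDensity ε F u) x t -
        a * ∑ i, (x - y) i * spaceDeriv i (energyDensity ε F u) x t =
      ε * ∑ i, spaceDeriv i u x t * spaceDeriv i (selfSimilarDefect a y u) x t +
        ε * a * ∑ i, spaceDeriv i u x t ^ 2 +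
        1 / ε * (deriv F (u x t) * selfSimilarDefect a y u x t) := by
  have hmixed : ∑ i, (x - y) i * ∑ j, spaceDeriv j u x t * spaceDeriv i (spaceDeriv j u) x t =
      ∑ i, spaceDeriv i u x t * ∑ j, (x - y) j * spaceDeriv i (spaceDeriv j u) x t := by
    simp only [Finset.mul_sum]
    rw [Finset.sum_comm]
    refine Finset.sum_congr rfl fun i _ => Finset.sum_congr rfl fun j _ => ?_
    rw [spaceDeriv_comm hu j i]
    ring
  have htransport : ∑ i, (x - y) i * spaceDeriv i (energyDensity ε F u) x t =
      ε * ∑ i, spaceDeriv i u x t * ∑ j, (x - y) j * spaceDeriv i (spaceDeriv j u) x t +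
        1 / ε * (deriv F (u x t) * ∑ i, (x - y) i * spaceDeriv i u x t) := by
    rw [← hmixed, Finset.mul_sum, Finset.mul_sum, Finset.mul_sum, ← Finset.sum_add_distrib]
    refine Finset.sum_congr rfl fun i _ => ?_
    rw [spaceDeriv_energyDensity hF hu]
    ring
  have hdefect : ∑ i, spaceDeriv i u x t * spaceDeriv i (selfSimilarDefect a y u) x t =
      ∑ i, spaceDeriv i u x t * spaceDeriv i (timeDeriv u) x t -
        a * (∑ i, spaceDeriv i u x t ^ 2 +
          ∑ i, spaceDeriv i u x t * ∑ j, (x - y) j * spaceDeriv i (spaceDeriv j u) x t) := by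
    simp only [spaceDeriv_selfSimilarDefect hu, ← Finset.sum_add_distrib, Finset.mul_sum (a := a),
      ← Finset.sum_sub_distrib]
    exact Finset.sum_congr rfl fun i _ => by ring
  rw [timeDeriv_energyDensity hF hu, htransport, hdefect, selfSimilarDefect]
  ring

/-- The field `X = a (x - y) e + ε w ∇u`, where `e` is the energy density and `w` the self-similar
defect of `u`. Integrating its divergence against the Gaussian gives the monotonicity formula. -/
noncomputable def monotonicityField (ε : ℝ) (F : ℝ → ℝ) (a : ℝ) (y : EuclideanSpace ℝ (Fin n))
    (u : EuclideanSpace ℝ (Fin n) → ℝ → ℝ) (i : Fin n) (x : EuclideanSpace ℝ (Fin n)) (t : ℝ) : ℝ :=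
  a * ((x - y) i * energyDensity ε F u x t) + ε * (selfSimilarDefect a y u x t * spaceDeriv i u x t)

lemma contDiff_monotonicityField (hF : ContDiff ℝ 1 F) (hu : ContDiff ℝ 2 (uncurry u)) (a : ℝ)
    (y : EuclideanSpace ℝ (Fin n)) (i : Fin n) :
    ContDiff ℝ 1 (uncurry (monotonicityField ε F a y u i)) := by
  have hcoord : ContDiff ℝ 1 fun q : EuclideanSpace ℝ (Fin n) × ℝ => (q.1 - y) i := by fun_prop
  exact (contDiff_const.mul (hcoord.mul (contDiff_energyDensity hF hu))).add
    (contDiff_const.mul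
      ((contDiff_selfSimilarDefect hu a y).mul (contDiff_spaceDeriv hu (by norm_num) i)))

lemma spaceDeriv_monotonicityField (hF : ContDiff ℝ 1 F) (hu : ContDiff ℝ 2 (uncurry u)) (a : ℝ)
    (y : EuclideanSpace ℝ (Fin n)) (i : Fin n) (x : EuclideanSpace ℝ (Fin n)) (t : ℝ) :
    spaceDeriv i (monotonicityField ε F a y u i) x t =
      a * ((x - y) i * spaceDeriv i (energyDensity ε F u) x t + energyDensity ε F u x t) +
        ε * (selfSimilarDefect a y u x t * spaceDeriv i (spaceDeriv i u) x t +
          spaceDeriv i u x t * spaceDeriv i (selfSimilarDefect a y u) x t) := by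
  have hcoord : Differentiable ℝ fun x : EuclideanSpace ℝ (Fin n) => (x - y) i := by fun_prop
  have henergy : Differentiable ℝ fun x => energyDensity ε F u x t :=
    (contDiff_slice (contDiff_energyDensity hF hu) t).differentiable one_ne_zero
  have hdefect : Differentiable ℝ fun x => selfSimilarDefect a y u x t :=
    (contDiff_slice (contDiff_selfSimilarDefect hu a y) t).differentiable one_ne_zero
  have hspace : Differentiable ℝ fun x => spaceDeriv i u x t :=
    (contDiff_slice (contDiff_spaceDeriv hu (m := 1) (by norm_num) i) t).differentiable one_ne_zero
  unfold monotonicityField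
  rw [spaceDeriv_add (by fun_prop) (by fun_prop), spaceDeriv_const_mul (by fun_prop),
    spaceDeriv_mul (g := fun x _ => (x - y) i) (hcoord x) (henergy x), spaceDeriv_coord,
    spaceDeriv_const_mul (by fun_prop), spaceDeriv_mul (hdefect x) (hspace x), if_pos rfl, mul_one]

lemma sum_spaceDeriv_monotonicityField_sub (hε : ε ≠ 0) (hF : ContDiff ℝ 1 F)
    (hu : ContDiff ℝ 2 (uncurry u)) (a : ℝ) (y x : EuclideanSpace ℝ (Fin n)) (t : ℝ)
    (hpde : timeDeriv u x t =
      ∑ i, spaceDeriv i (spaceDeriv i u) x t - 1 / ε ^ 2 * deriv F (u x t)) :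
    ∑ i, (spaceDeriv i (monotonicityField ε F a y u i) x t -
        a * ((x - y) i * monotonicityField ε F a y u i x t)) =
      timeDeriv (energyDensity ε F u) x t -
        (‖x - y‖ ^ 2 * a ^ 2 - ((n : ℝ) - 1) * a) * energyDensity ε F u x t -
        (a * discrepancy ε F u x t - ε * selfSimilarDefect a y u x t ^ 2) := by
  have hsum : ∑ i, (spaceDeriv i (monotonicityField ε F a y u i) x t -
        a * ((x - y) i * monotonicityField ε F a y u i x t)) =
      a * (∑ i, (x - y) i * spaceDeriv i (energyDensity ε F u) x t) +
        n * (a * energyDensity ε F u x t) +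
        ε * selfSimilarDefect a y u x t * (∑ i, spaceDeriv i (spaceDeriv i u) x t) +
        ε * (∑ i, spaceDeriv i u x t * spaceDeriv i (selfSimilarDefect a y u) x t) -
        a ^ 2 * energyDensity ε F u x t * (∑ i, (x - y) i ^ 2) -
        a * ε * selfSimilarDefect a y u x t * (∑ i, (x - y) i * spaceDeriv i u x t) := by
    have hcard (c : ℝ) : n * c = ∑ _i : Fin n, c := by simp
    simp only [hcard, Finset.mul_sum, ← Finset.sum_add_distrib, ← Finset.sum_sub_distrib]
    refine Finset.sum_congr rfl fun i _ => ?_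
    rw [spaceDeriv_monotonicityField hF hu, monotonicityField]
    ring
  have hgradient : discrepancy ε F u x t + energyDensity ε F u x t =
      ε * ∑ i, spaceDeriv i u x t ^ 2 := by
    rw [discrepancy_eq, energyDensity_eq]
    ring
  have htransport := timeDeriv_energyDensity_sub_drift (ε := ε) hF hu a y x t
  have hlaplacian : ∑ i, spaceDeriv i (spaceDeriv i u) x t =
      selfSimilarDefect a y u x t + a * ∑ i, (x - y) i * spaceDeriv i u x t +
        1 / ε ^ 2 * deriv F (u x t) := by
    rw [selfSimilarDefect, hpde]
    ring
  have hε_sq : ε * (1 / ε ^ 2) = 1 / ε := by field_simp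
  rw [hsum, hlaplacian, EuclideanSpace.real_norm_sq_eq]
  linear_combination -htransport + a * hgradient +
    selfSimilarDefect a y u x t * deriv F (u x t) * hε_sq

end Energy

section AllenCahnFlow

open Function

variable {n : ℕ}

/-- `u` solves the parabolic Allen–Cahn equation `∂ₜu = Δu - F'(u)/ε²` at times in `I`, for a `C²`
potential `F`, and is bounded there together with its space derivatives up to third order. -/
structure IsAllenCahnFlow (ε : ℝ) (F : ℝ → ℝ) (I : Set ℝ)
    (u : EuclideanSpace ℝ (Fin n) → ℝ → ℝ) : Prop where
  contDiff_potential : ContDiff ℝ 2 F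
  hasBoundedSpaceDerivs : HasBoundedSpaceDerivs 3 I u
  timeDeriv_eq : ∀ x, ∀ t ∈ I, timeDeriv u x t =
    ∑ i, spaceDeriv i (spaceDeriv i u) x t - 1 / ε ^ 2 * deriv F (u x t)

namespace IsAllenCahnFlow

variable {ε : ℝ} {F : ℝ → ℝ} {I : Set ℝ} {u : EuclideanSpace ℝ (Fin n) → ℝ → ℝ}
  {y : EuclideanSpace ℝ (Fin n)} {t : ℝ}

lemma contDiff (h : IsAllenCahnFlow ε F I u) : ContDiff ℝ 2 (uncurry u) :=
  h.hasBoundedSpaceDerivs.contDiff.of_le (by norm_num)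

lemma spaceDeriv_timeDeriv_eq (h : IsAllenCahnFlow ε F I u) (i : Fin n)
    (x : EuclideanSpace ℝ (Fin n)) (ht : t ∈ I) :
    spaceDeriv i (timeDeriv u) x t =
      ∑ j, spaceDeriv i (spaceDeriv j (spaceDeriv j u)) x t -
        1 / ε ^ 2 * (deriv (deriv F) (u x t) * spaceDeriv i u x t) := by
  have hslice : spaceDeriv i (timeDeriv u) x t = spaceDeriv i (fun x t =>
      ∑ j, spaceDeriv j (spaceDeriv j u) x t - 1 / ε ^ 2 * deriv F (u x t)) x t := by
    simp only [spaceDeriv, h.timeDeriv_eq _ t ht]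
  have hu : Differentiable ℝ fun x => u x t :=
    (contDiff_slice h.contDiff t).differentiable two_ne_zero
  have hspace (j : Fin n) : Differentiable ℝ fun x => spaceDeriv j (spaceDeriv j u) x t :=
    (contDiff_slice ((h.hasBoundedSpaceDerivs.spaceDeriv j).spaceDeriv j).contDiff t).differentiable
      one_ne_zero
  have hF : Differentiable ℝ (deriv F) := h.contDiff_potential.differentiable_deriv_two
  have hpotential : Differentiable ℝ fun x => deriv F (u x t) := hF.comp hu
  rw [hslice, spaceDeriv_sub (by fun_prop) (by fun_prop), spaceDeriv_sum fun j _ => hspace j x,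
    spaceDeriv_const_mul (g := fun x t => deriv F (u x t)) (hpotential x),
    spaceDeriv_comp (hF _) (hu x)]

lemma spaceDeriv_mem_polyGrowth (h : IsAllenCahnFlow ε F I u) (i : Fin n) :
    spaceDeriv i u ∈ polyGrowth y I :=
  (h.hasBoundedSpaceDerivs.spaceDeriv i).mem_polyGrowth

lemma spaceDeriv_spaceDeriv_mem_polyGrowth (h : IsAllenCahnFlow ε F I u) (i j : Fin n) :
    spaceDeriv i (spaceDeriv j u) ∈ polyGrowth y I :=
  ((h.hasBoundedSpaceDerivs.spaceDeriv j).spaceDeriv i).mem_polyGrowth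

lemma deriv_potential_mem_polyGrowth (h : IsAllenCahnFlow ε F I u) :
    (fun x t => deriv F (u x t)) ∈ polyGrowth y I :=
  h.hasBoundedSpaceDerivs.comp_mem_polyGrowth (h.contDiff_potential.continuous_deriv one_le_two)

lemma timeDeriv_mem_polyGrowth (h : IsAllenCahnFlow ε F I u) : timeDeriv u ∈ polyGrowth y I :=
  mem_polyGrowth_congr h.timeDeriv_eq <| sub_mem
    (sum_mem_polyGrowth fun i _ => h.spaceDeriv_spaceDeriv_mem_polyGrowth i i)
    (mul_mem (const_mem_polyGrowth _) h.deriv_potential_mem_polyGrowth)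

lemma spaceDeriv_timeDeriv_mem_polyGrowth (h : IsAllenCahnFlow ε F I u) (i : Fin n) :
    spaceDeriv i (timeDeriv u) ∈ polyGrowth y I := by
  have hF : Continuous (deriv (deriv F)) :=
    (h.contDiff_potential.deriv' (n := 1)).continuous_deriv le_rfl
  exact mem_polyGrowth_congr (fun x _ ht => h.spaceDeriv_timeDeriv_eq i x ht) <| sub_mem
    (sum_mem_polyGrowth fun j _ =>
      (((h.hasBoundedSpaceDerivs.spaceDeriv j).spaceDeriv j).spaceDeriv i).mem_polyGrowth)
    (mul_mem (const_mem_polyGrowth _) (mul_mem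
      (h.hasBoundedSpaceDerivs.comp_mem_polyGrowth hF) (h.spaceDeriv_mem_polyGrowth i)))

lemma energyDensity_mem_polyGrowth (h : IsAllenCahnFlow ε F I u) :
    energyDensity ε F u ∈ polyGrowth y I :=
  mem_polyGrowth_congr (fun x t _ => energyDensity_eq x t) <| add_mem
    (mul_mem (const_mem_polyGrowth _)
      (sum_mem_polyGrowth fun i _ => pow_mem (h.spaceDeriv_mem_polyGrowth i) 2))
    (mul_mem (const_mem_polyGrowth _)
      (h.hasBoundedSpaceDerivs.comp_mem_polyGrowth h.contDiff_potential.continuous))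

lemma discrepancy_mem_polyGrowth (h : IsAllenCahnFlow ε F I u) :
    discrepancy ε F u ∈ polyGrowth y I :=
  mem_polyGrowth_congr (fun x t _ => discrepancy_eq x t) <| sub_mem
    (mul_mem (const_mem_polyGrowth _)
      (sum_mem_polyGrowth fun i _ => pow_mem (h.spaceDeriv_mem_polyGrowth i) 2))
    (mul_mem (const_mem_polyGrowth _)
      (h.hasBoundedSpaceDerivs.comp_mem_polyGrowth h.contDiff_potential.continuous))

lemma spaceDeriv_energyDensity_mem_polyGrowth (h : IsAllenCahnFlow ε F I u) (i : Fin n) :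
    spaceDeriv i (energyDensity ε F u) ∈ polyGrowth y I :=
  mem_polyGrowth_congr (fun x t _ => spaceDeriv_energyDensity
      (h.contDiff_potential.of_le one_le_two) h.contDiff i x t) <| add_mem
    (mul_mem (const_mem_polyGrowth _) (sum_mem_polyGrowth fun j _ =>
      mul_mem (h.spaceDeriv_mem_polyGrowth j) (h.spaceDeriv_spaceDeriv_mem_polyGrowth i j)))
    (mul_mem (const_mem_polyGrowth _)
      (mul_mem h.deriv_potential_mem_polyGrowth (h.spaceDeriv_mem_polyGrowth i)))

lemma timeDeriv_energyDensity_mem_polyGrowth (h : IsAllenCahnFlow ε F I u) :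
    timeDeriv (energyDensity ε F u) ∈ polyGrowth y I :=
  mem_polyGrowth_congr (fun x t _ => timeDeriv_energyDensity
      (h.contDiff_potential.of_le one_le_two) h.contDiff x t) <| add_mem
    (mul_mem (const_mem_polyGrowth _) (sum_mem_polyGrowth fun j _ =>
      mul_mem (h.spaceDeriv_mem_polyGrowth j) (h.spaceDeriv_timeDeriv_mem_polyGrowth j)))
    (mul_mem (const_mem_polyGrowth _)
      (mul_mem h.deriv_potential_mem_polyGrowth h.timeDeriv_mem_polyGrowth))

lemma selfSimilarDefect_mem_polyGrowth (h : IsAllenCahnFlow ε F I u) (a : ℝ) :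
    selfSimilarDefect a y u ∈ polyGrowth y I :=
  sub_mem h.timeDeriv_mem_polyGrowth (mul_mem (const_mem_polyGrowth a)
    (sum_mem_polyGrowth fun i _ =>
      mul_mem (coord_mem_polyGrowth i) (h.spaceDeriv_mem_polyGrowth i)))

lemma spaceDeriv_selfSimilarDefect_mem_polyGrowth (h : IsAllenCahnFlow ε F I u) (a : ℝ)
    (i : Fin n) : spaceDeriv i (selfSimilarDefect a y u) ∈ polyGrowth y I :=
  mem_polyGrowth_congr (fun x t _ => spaceDeriv_selfSimilarDefect h.contDiff a y i x t) <| sub_mem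
    (h.spaceDeriv_timeDeriv_mem_polyGrowth i)
    (mul_mem (const_mem_polyGrowth a) (add_mem (h.spaceDeriv_mem_polyGrowth i)
      (sum_mem_polyGrowth fun j _ =>
        mul_mem (coord_mem_polyGrowth j) (h.spaceDeriv_spaceDeriv_mem_polyGrowth i j))))

lemma monotonicityField_mem_polyGrowth (h : IsAllenCahnFlow ε F I u) (a : ℝ) (i : Fin n) :
    monotonicityField ε F a y u i ∈ polyGrowth y I :=
  add_mem
    (mul_mem (const_mem_polyGrowth a)
      (mul_mem (coord_mem_polyGrowth i) h.energyDensity_mem_polyGrowth))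
    (mul_mem (const_mem_polyGrowth ε)
      (mul_mem (h.selfSimilarDefect_mem_polyGrowth a) (h.spaceDeriv_mem_polyGrowth i)))

lemma spaceDeriv_monotonicityField_mem_polyGrowth (h : IsAllenCahnFlow ε F I u) (a : ℝ)
    (i : Fin n) : spaceDeriv i (monotonicityField ε F a y u i) ∈ polyGrowth y I :=
  mem_polyGrowth_congr (fun x t _ => spaceDeriv_monotonicityField
      (h.contDiff_potential.of_le one_le_two) h.contDiff a y i x t) <| add_mem
    (mul_mem (const_mem_polyGrowth a) (add_mem
      (mul_mem (coord_mem_polyGrowth i) (h.spaceDeriv_energyDensity_mem_polyGrowth i))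
      h.energyDensity_mem_polyGrowth))
    (mul_mem (const_mem_polyGrowth ε) (add_mem
      (mul_mem (h.selfSimilarDefect_mem_polyGrowth a)
        (h.spaceDeriv_spaceDeriv_mem_polyGrowth i i))
      (mul_mem (h.spaceDeriv_mem_polyGrowth i)
        (h.spaceDeriv_selfSimilarDefect_mem_polyGrowth a i))))

/-- The monotonicity formula of Huisken and Ilmanen. For `s = τ - t` the left integrand is the time
derivative of the energy density times `gaussianDensity n y (τ - t)`. -/
lemma monotonicity_formula (h : IsAllenCahnFlow ε F I u) (hε : ε ≠ 0) (ht : t ∈ I) {s : ℝ}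
    (hs : 0 < s) :
    ∫ x, gaussianDensity n y s x * (timeDeriv (energyDensity ε F u) x t -
        gaussianLogDeriv y s x * energyDensity ε F u x t) =
      ∫ x, gaussianDensity n y s x * (1 / (2 * s) * discrepancy ε F u x t -
        ε * selfSimilarDefect (1 / (2 * s)) y u x t ^ 2) := by
  set a := 1 / (2 * s)
  have hF : ContDiff ℝ 1 F := h.contDiff_potential.of_le one_le_two
  have hX := h.monotonicityField_mem_polyGrowth (y := y) a
  have hX' := h.spaceDeriv_monotonicityField_mem_polyGrowth (y := y) a
  have hX_diff (i : Fin n) : Differentiable ℝ fun x => monotonicityField ε F a y u i x t :=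
    (contDiff_slice (contDiff_monotonicityField hF h.contDiff a y i) t).differentiable one_ne_zero
  have hdiv : (fun x t => ∑ i, (spaceDeriv i (monotonicityField ε F a y u i) x t -
      a * ((x - y) i * monotonicityField ε F a y u i x t))) ∈ polyGrowth y I :=
    sum_mem_polyGrowth fun i _ => sub_mem (hX' i)
      (mul_mem (const_mem_polyGrowth a) (mul_mem (coord_mem_polyGrowth i) (hX i)))
  have hdissipation : (fun x t => a * discrepancy ε F u x t -
      ε * selfSimilarDefect a y u x t ^ 2) ∈ polyGrowth y I :=
    sub_mem (mul_mem (const_mem_polyGrowth a) h.discrepancy_mem_polyGrowth)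
      (mul_mem (const_mem_polyGrowth ε) (pow_mem (h.selfSimilarDefect_mem_polyGrowth a) 2))
  have hsplit (x : EuclideanSpace ℝ (Fin n)) := sum_spaceDeriv_monotonicityField_sub hε hF
    h.contDiff a y x t (h.timeDeriv_eq x t ht)
  rw [← zero_add (∫ x, gaussianDensity n y s x * (a * _ - _)),
    ← integral_gaussianDensity_mul_divergence hX hX' ht hX_diff hs,
    ← integral_add (integrable_gaussianDensity_mul hdiv ht hs)
      (integrable_gaussianDensity_mul hdissipation ht hs)]
  refine integral_congr_ae (.of_forall fun x => ?_)
  simp only [← mul_add, a] at hsplit ⊢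
  rw [hsplit, gaussianLogDeriv]
  ring

lemma integral_gaussianDensity_mul_energyDensity_le {t₁ t₂ τ : ℝ}
    (h : IsAllenCahnFlow ε F (Set.Icc t₁ t₂) u) (hε : 0 < ε) (ht : t₁ ≤ t₂) (hτ : t₂ < τ)
    (hξ : ∀ x, ∀ t ∈ Set.Icc t₁ t₂, discrepancy ε F u x t ≤ 0) :
    ∫ x, gaussianDensity n y (τ - t₂) x * energyDensity ε F u x t₂ ≤
      ∫ x, gaussianDensity n y (τ - t₁) x * energyDensity ε F u x t₁ := by
  have hscale : ∀ t ∈ Set.Icc t₁ t₂, τ - t ∈ Set.Icc (τ - t₂) (τ - t₁) := fun t ht =>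
    ⟨sub_le_sub_left ht.2 τ, sub_le_sub_left ht.1 τ⟩
  have hscale_pos : ∀ t ∈ Set.Icc t₁ t₂, 0 < τ - t := fun t ht => sub_pos.mpr (ht.2.trans_lt hτ)
  have henergy : energyDensity ε F u ∈ polyGrowth y (Set.Icc t₁ t₂) :=
    h.energyDensity_mem_polyGrowth
  have hrate : (fun x t => timeDeriv (energyDensity ε F u) x t -
      gaussianLogDeriv y (τ - t) x * energyDensity ε F u x t) ∈ polyGrowth y (Set.Icc t₁ t₂) :=
    sub_mem h.timeDeriv_energyDensity_mem_polyGrowth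
      (mul_mem (gaussianLogDeriv_mem_polyGrowth y hτ) henergy)
  obtain ⟨B, hB, hB_le⟩ := exists_integrable_bound_gaussianDensity_mul henergy (sub_pos.mpr hτ)
    (sub_le_sub_left ht τ)
  obtain ⟨B', hB', hB'_le⟩ := exists_integrable_bound_gaussianDensity_mul hrate (sub_pos.mpr hτ)
    (sub_le_sub_left ht τ)
  have henergy_diff : Differentiable ℝ (uncurry (energyDensity ε F u)) :=
    (contDiff_energyDensity (h.contDiff_potential.of_le one_le_two) h.contDiff).differentiable
      one_ne_zero
  refine antitoneOn_integral_of_dominated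
    (f := fun t x => gaussianDensity n y (τ - t) x * energyDensity ε F u x t)
    (f' := fun t x => gaussianDensity n y (τ - t) x * (timeDeriv (energyDensity ε F u) x t -
      gaussianLogDeriv y (τ - t) x * energyDensity ε F u x t))
    (fun t ht => (integrable_gaussianDensity_mul henergy ht (hscale_pos t ht)).aestronglyMeasurable)
    (fun t ht => (integrable_gaussianDensity_mul hrate (Set.Ioo_subset_Icc_self ht)
      (hscale_pos t (Set.Ioo_subset_Icc_self ht))).aestronglyMeasurable)
    (fun x t ht => hB_le x t ht _ (hscale t ht)) hB
    (fun x t ht => hB'_le x t ht _ (hscale t ht)) hB' (fun x t ht => ?_) (fun t ht => ?_)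
    (Set.left_mem_Icc.mpr ht) (Set.right_mem_Icc.mpr ht) ht
  · have hgaussian := (hasDerivAt_gaussianDensity_scale y x (hscale_pos t ht)).comp_const_sub τ t
    convert! hgaussian.mul (hasDerivAt_timeDeriv henergy_diff x t) using 1
    ring
  · have ht := Set.Ioo_subset_Icc_self ht
    have hs := hscale_pos t ht
    rw [h.monotonicity_formula hε.ne' ht hs]
    refine integral_nonpos fun x => mul_nonpos_of_nonneg_of_nonpos (gaussianDensity_nonneg y hs x)
      (sub_nonpos.mpr ((mul_nonpos_of_nonneg_of_nonpos ?_ (hξ x t ht)).trans ?_)) <;> positivity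

end IsAllenCahnFlow

end AllenCahnFlow

section Entropy

variable {n : ℕ}

lemma lintegral_ofReal_withDensity_ofReal {α : Type*} [MeasurableSpace α] {μ : Measure α}
    {f g : α → ℝ} (hf : Measurable f) (hg : Measurable g) (hg_nonneg : 0 ≤ g)
    (hf_nonneg : 0 ≤ f) (hgf : Integrable (fun x => g x * f x) μ) :
    ∫⁻ x, ENNReal.ofReal (g x) ∂μ.withDensity (fun x => ENNReal.ofReal (f x)) =
      ENNReal.ofReal (∫ x, g x * f x ∂μ) := by
  rw [lintegral_withDensity_eq_lintegral_mul _ hf.ennreal_ofReal hg.ennreal_ofReal,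
    ofReal_integral_eq_lintegral_ofReal hgf
      (.of_forall fun x => mul_nonneg (hg_nonneg x) (hf_nonneg x))]
  refine lintegral_congr fun x => ?_
  rw [Pi.mul_apply, mul_comm, ENNReal.ofReal_mul (hg_nonneg x)]

lemma entropy_le_entropy_of_lintegral_le_add {μ ν : Measure (EuclideanSpace ℝ (Fin n))} {δ : ℝ}
    (hδ : 0 ≤ δ)
    (h : ∀ y s, 0 < s → ∫⁻ x, ENNReal.ofReal (gaussianDensity n y s x) ∂μ ≤
      ∫⁻ x, ENNReal.ofReal (gaussianDensity n y (s + δ) x) ∂ν) :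
    entropy n μ ≤ entropy n ν :=
  iSup_le fun y => iSup₂_le fun s hs => (h y s hs).trans <|
    le_iSup_of_le y <| le_iSup₂_of_le (s + δ) (add_pos_of_pos_of_nonneg hs hδ) le_rfl

variable {ε : ℝ} {F : ℝ → ℝ} {u : EuclideanSpace ℝ (Fin n) → ℝ → ℝ}

lemma energyDensity_nonneg_of_discrepancy_nonpos {x : EuclideanSpace ℝ (Fin n)} {t : ℝ}
    (hε : 0 ≤ ε) (hξ : discrepancy ε F u x t ≤ 0) : 0 ≤ energyDensity ε F u x t := by
  have hgradient : 0 ≤ ε / 2 * ‖gradient (fun y => u y t) x‖ ^ 2 := by positivity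
  exact add_nonneg hgradient (hgradient.trans (sub_nonpos.mp hξ))

/-- The measure `μᵗ` on `ℝⁿ` whose density is the energy density of `u` at time `t`. -/
noncomputable def energyMeasure (ε : ℝ) (F : ℝ → ℝ) (u : EuclideanSpace ℝ (Fin n) → ℝ → ℝ)
    (t : ℝ) : Measure (EuclideanSpace ℝ (Fin n)) :=
  volume.withDensity fun x => ENNReal.ofReal (energyDensity ε F u x t)

namespace IsAllenCahnFlow

lemma lintegral_gaussianDensity_energyMeasure {I : Set ℝ} (h : IsAllenCahnFlow ε F I u)
    {t : ℝ} (ht : t ∈ I) (he : ∀ x, 0 ≤ energyDensity ε F u x t) (y : EuclideanSpace ℝ (Fin n))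
    {s : ℝ} (hs : 0 < s) :
    ∫⁻ x, ENNReal.ofReal (gaussianDensity n y s x) ∂energyMeasure ε F u t =
      ENNReal.ofReal (∫ x, gaussianDensity n y s x * energyDensity ε F u x t) :=
  have henergy : energyDensity ε F u ∈ polyGrowth y I := h.energyDensity_mem_polyGrowth
  lintegral_ofReal_withDensity_ofReal (henergy.1 t ht).measurable
    (continuous_gaussianDensity y s).measurable (gaussianDensity_nonneg y hs) he
    (integrable_gaussianDensity_mul henergy ht hs)

lemma entropy_energyMeasure_le {t₁ t₂ : ℝ} (h : IsAllenCahnFlow ε F (Set.Icc t₁ t₂) u)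
    (hε : 0 < ε) (ht : t₁ ≤ t₂) (hξ : ∀ x, ∀ t ∈ Set.Icc t₁ t₂, discrepancy ε F u x t ≤ 0) :
    entropy n (energyMeasure ε F u t₂) ≤ entropy n (energyMeasure ε F u t₁) := by
  have henergy_nonneg (t) (ht : t ∈ Set.Icc t₁ t₂) (x) : 0 ≤ energyDensity ε F u x t :=
    energyDensity_nonneg_of_discrepancy_nonpos hε.le (hξ x t ht)
  have hmem₁ := Set.left_mem_Icc.mpr ht
  have hmem₂ := Set.right_mem_Icc.mpr ht
  refine entropy_le_entropy_of_lintegral_le_add (sub_nonneg.mpr ht) fun y s hs => ?_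
  have hs' : 0 < s + (t₂ - t₁) := by linarith
  rw [h.lintegral_gaussianDensity_energyMeasure hmem₂ (henergy_nonneg t₂ hmem₂) y hs,
    h.lintegral_gaussianDensity_energyMeasure hmem₁ (henergy_nonneg t₁ hmem₁) y hs']
  refine ENNReal.ofReal_le_ofReal ?_
  have hmono := h.integral_gaussianDensity_mul_energyDensity_le (y := y) hε ht
    (lt_add_of_pos_left t₂ hs) hξ
  rwa [add_sub_cancel_right, add_sub_assoc] at hmono

end IsAllenCahnFlow

end Entropy

/-- The standard double-well potential of the Allen–Cahn equation, with wells `±1`. -/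
noncomputable def doubleWell (v : ℝ) : ℝ :=
  (1 / 2) * (1 - v ^ 2) ^ 2

lemma contDiff_doubleWell : ContDiff ℝ 2 doubleWell := by
  unfold doubleWell
  fun_prop

lemma deriv_doubleWell (v : ℝ) : deriv doubleWell v = 2 * v * (v ^ 2 - 1) := by
  have hbase : HasDerivAt (fun v : ℝ => 1 - v ^ 2) (-(2 * v)) v := by
    simpa using (hasDerivAt_pow 2 v).const_sub 1
  refine ((hbase.pow 2).const_mul (1 / 2)).deriv.trans ?_
  push_cast
  ring

theorem allen_cahn_entropy_monotone_general (n : ℕ) (ε : ℝ) (hε : 0 < ε) (F : ℝ → ℝ)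
    (hF : ContDiff ℝ 2 F) (u : EuclideanSpace ℝ (Fin n) → ℝ → ℝ)
    (hu : ContDiff ℝ 3 (fun p : EuclideanSpace ℝ (Fin n) × ℝ => u p.1 p.2))
    (hpde : ∀ x, ∀ t, 0 ≤ t →
      deriv (u x) t = spaceLaplacian n (fun y => u y t) x - (1 / ε ^ 2) * deriv F (u x t))
    (hbnd : ∀ T > (0 : ℝ), ∃ C : ℝ, ∀ x, ∀ t ∈ Set.Icc (0 : ℝ) T,
      ∀ i ≤ 3, ‖iteratedFDeriv ℝ i (fun y => u y t) x‖ ≤ C)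
    (μ : ℝ → Measure (EuclideanSpace ℝ (Fin n)))
    (hμ : ∀ t, 0 ≤ t → μ t = volume.withDensity (fun x =>
      ENNReal.ofReal ((ε / 2) * ‖gradient (fun y => u y t) x‖ ^ 2 + (1 / ε) * F (u x t))))
    (hdisc : ∀ x, ∀ t, 0 ≤ t →
      (ε / 2) * ‖gradient (fun y => u y t) x‖ ^ 2 ≤ (1 / ε) * F (u x t)) :
    ∀ t₁ t₂ : ℝ, 0 ≤ t₁ → t₁ ≤ t₂ → entropy n (μ t₂) ≤ entropy n (μ t₁) := by
  intro t₁ t₂ ht₁ ht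
  obtain ⟨C, hC⟩ := hbnd (t₂ + 1) (by linarith)
  have hflow : IsAllenCahnFlow ε F (Set.Icc t₁ t₂) u :=
    { contDiff_potential := hF
      hasBoundedSpaceDerivs := ⟨hu, C, fun x t ht => hC x t
        ⟨ht₁.trans ht.1, ht.2.trans (le_add_of_nonneg_right zero_le_one)⟩⟩
      timeDeriv_eq := fun x t ht => hpde x t (ht₁.trans ht.1) }
  rw [hμ t₁ ht₁, hμ t₂ (ht₁.trans ht)]
  exact hflow.entropy_energyMeasure_le hε ht fun x t ht =>
    sub_nonpos.mpr (hdisc x t (ht₁.trans ht.1))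

/-- Monotonicity of entropy under the Allen–Cahn flow on `ℝⁿ` with nonpositive discrepancy:
for all `0 ≤ t₁ ≤ t₂`, `λ(μ^{t₂}) ≤ λ(μ^{t₁})`. -/
theorem allen_cahn_entropy_monotone (n : ℕ) (hn : 1 ≤ n) (ε : ℝ) (hε : 0 < ε)
    (u : EuclideanSpace ℝ (Fin n) → ℝ → ℝ)
    (hsmooth : ContDiff ℝ (⊤ : ℕ∞) (fun p : EuclideanSpace ℝ (Fin n) × ℝ => u p.1 p.2))
    (hu1 : ∀ x t, |u x t| ≤ 1)
    (hpde : ∀ x, ∀ t, 0 ≤ t →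
      deriv (u x) t = spaceLaplacian n (fun y => u y t) x
        - (1 / ε ^ 2) * (2 * u x t * ((u x t) ^ 2 - 1)))
    (hbnd : ∀ T > (0 : ℝ), ∃ C : ℝ, ∀ x, ∀ t ∈ Set.Icc (0 : ℝ) T,
      (∀ i ≤ 3, ‖iteratedFDeriv ℝ i (fun y => u y t) x‖ ≤ C) ∧ |deriv (u x) t| ≤ C)
    (μ : ℝ → Measure (EuclideanSpace ℝ (Fin n)))
    (hμ : ∀ t, μ t = volume.withDensity (fun x =>
      ENNReal.ofReal ((ε / 2) * ‖gradient (fun y => u y t) x‖ ^ 2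
        + (1 / ε) * ((1 / 2) * (1 - (u x t) ^ 2) ^ 2))))
    (hdisc : ∀ x, ∀ t, 0 ≤ t →
      (ε / 2) * ‖gradient (fun y => u y t) x‖ ^ 2
        ≤ (1 / ε) * ((1 / 2) * (1 - (u x t) ^ 2) ^ 2)) :
    ∀ t₁ t₂ : ℝ, 0 ≤ t₁ → t₁ ≤ t₂ → entropy n (μ t₂) ≤ entropy n (μ t₁) :=
  allen_cahn_entropy_monotone_general n ε hε doubleWell contDiff_doubleWell u
    (hsmooth.of_le ENat.LEInfty.out) (fun x t ht => by rw [deriv_doubleWell, hpde x t ht])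
    (fun T hT => (hbnd T hT).imp fun C hC x t ht => (hC x t ht).1) μ (fun t _ => hμ t) hdisc
end

section
/- Fix n ≥ 1 and ε > 0, and let u : ℝⁿ × [0,∞) → ℝ be a smooth solution of ∂ₜu = Δu − (1/ε²) f(u) with f(u) = 2u(u²−1), |u| ≤ 1, such that for every T > 0 the function u and its spatial derivatives up to third order and its time derivative are uniformly bounded on ℝⁿ × [0,T]. Let μᵗ denote the measure with density (ε/2)|∇u(x,t)|² + (1/ε)F(u(x,t)) with respect to Lebesgue measure, F(u) = (1/2)(1−u²)². Assume (ε/2)|∇u(x,t)|² ≤ (1/ε)F(u(x,t)) for all x ∈ ℝⁿ and t ≥ 0. Then for every T > 0 and all 0 ≤ t₁ ≤ t₂, the local entropy satisfies λ^{(0,T)}(μ^{t₂}) ≤ λ^{(0,T+(t₂−t₁))}(μ^{t₁}). -/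
open Real MeasureTheory Metric ENNReal

/-- The local entropy `λ^{(0,T)}(μ) = sup_{y ∈ ℝⁿ, 0 < s < T} ∫ ρ_{y,s}(x,0) dμ(x)` for a
real `T > 0`. -/
noncomputable def localEntropy (n : ℕ) (T : ℝ) (μ : Measure (EuclideanSpace ℝ (Fin n))) :
    ℝ≥0∞ :=
  ⨆ (y : EuclideanSpace ℝ (Fin n)) (s : ℝ) (_ : 0 < s) (_ : s < T),
    ∫⁻ x, ENNReal.ofReal (gaussianDensity n y s x) ∂μ

/-!
Fix a centre `y` and a final scale `s`, put `τ = s + t₂ - t`, and let `ρ` be the `(n-1)`-dimensional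
Gaussian of scale `τ` around `y`, so that `∇ρ = -ρ (x - y) / (2τ)`. With `e` the energy
density, `φ = ∂ₜu - ⟪x - y, ∇u⟫ / (2τ)` and the flux `P = ε φ ∇u + e (x - y) / (2τ)`, the equation
gives the pointwise identity
`∂ₜ(ρ e) = div (ρ P) - ρ (ε φ² - ξ / (2τ))`, where `ξ = (ε/2)|∇u|² - F(u)/ε` is the discrepancy.
Since `∫ div (ρ P) = 0` and `ξ ≤ 0`, the weighted energy `∫ ρ e` is nonincreasing: its value at
`t₂`, where `τ = s`, is at most its value at `t₁`, where `τ = s + (t₂ - t₁)`. The monotonicity of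
the local entropy is the supremum of these inequalities over `y` and `s`.
-/

namespace AllenCahn

open Filter Topology Set Module Function
open scoped ContDiff Gradient RealInnerProductSpace

section Divergence

variable {E : Type*} [NormedAddCommGroup E] [NormedSpace ℝ E]

/-- The divergence `∑ᵢ ∂ᵢVᵢ` of a vector field, as the basis-free trace of its derivative. -/
noncomputable def divergence (V : E → E) (x : E) : ℝ :=
  LinearMap.trace ℝ E (fderiv ℝ V x)

lemma divergence_add {V W : E → E} {x : E} (hV : DifferentiableAt ℝ V x)
    (hW : DifferentiableAt ℝ W x) :
    divergence (fun y => V y + W y) x = divergence V x + divergence W x := by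
  simp only [divergence, fderiv_fun_add hV hW, ContinuousLinearMap.toLinearMap_add, map_add]

variable [FiniteDimensional ℝ E]

lemma divergence_sub_const (y x : E) : divergence (fun x => x - y) x = finrank ℝ E := by
  simp only [divergence, fderiv_sub_const, fderiv_fun_id, ContinuousLinearMap.coe_id,
    LinearMap.trace_id]

lemma divergence_smul {f : E → ℝ} {V : E → E} {x : E} (hf : DifferentiableAt ℝ f x)
    (hV : DifferentiableAt ℝ V x) :
    divergence (fun y => f y • V y) x = f x * divergence V x + fderiv ℝ f x (V x) := by
  simp only [divergence, fderiv_fun_smul hf hV, ContinuousLinearMap.toLinearMap_add,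
    ContinuousLinearMap.toLinearMap_smul, map_add, map_smul, smul_eq_mul]
  congr 1
  exact LinearMap.trace_smulRight (fderiv ℝ f x : E →ₗ[ℝ] ℝ) (V x)

/-- The trace as a continuous linear functional, for passing limits and derivatives through it. -/
noncomputable def traceCLM (E : Type*) [NormedAddCommGroup E] [NormedSpace ℝ E]
    [FiniteDimensional ℝ E] : (E →L[ℝ] E) →L[ℝ] ℝ :=
  LinearMap.toContinuousLinearMap (LinearMap.trace ℝ E ∘ₗ ContinuousLinearMap.coeLM ℝ)

lemma divergence_eq_traceCLM_comp (V : E → E) : divergence V = traceCLM E ∘ fderiv ℝ V :=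
  rfl

lemma contDiff_divergence {V : E → E} {k m : ℕ∞ω} (hV : ContDiff ℝ m V) (hk : k + 1 ≤ m) :
    ContDiff ℝ k (divergence V) :=
  (traceCLM E).contDiff.comp (hV.fderiv_right hk)

lemma norm_iteratedFDeriv_divergence_le {V : E → E} {x : E} {i : ℕ}
    (hV : ContDiff ℝ (i + 1) V) :
    ‖iteratedFDeriv ℝ i (divergence V) x‖ ≤ ‖traceCLM E‖ * ‖iteratedFDeriv ℝ (i + 1) V x‖ := by
  rw [divergence_eq_traceCLM_comp, ← norm_iteratedFDeriv_fderiv]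
  exact (traceCLM E).norm_iteratedFDeriv_comp_left (hV.fderiv_right le_rfl).contDiffAt le_rfl

variable [MeasurableSpace E] [BorelSpace E] {μ : Measure E} [μ.IsAddHaarMeasure]

lemma integral_divergence_eq_zero_of_hasCompactSupport {V : E → E} (hV : ContDiff ℝ 1 V)
    (hsupp : HasCompactSupport V) : ∫ x, divergence V x ∂μ = 0 := by
  have hint : Integrable (fderiv ℝ V) μ :=
    (hV.continuous_fderiv one_ne_zero).integrable_of_hasCompactSupport (hsupp.fderiv ℝ)
  have hint_apply (v : E) : Integrable (fun x => fderiv ℝ V x v) μ :=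
    hint.apply_continuousLinearMap v
  have hzero : ∫ x, fderiv ℝ V x ∂μ = 0 := by
    ext v
    have := integral_smul_fderiv_eq_neg_fderiv_smul_of_integrable (μ := μ) (v := v)
      (f := fun _ => (1 : ℝ)) (g := V) (by simp) (by simpa using hint_apply v)
      (by simpa using hV.continuous.integrable_of_hasCompactSupport hsupp) (by simp)
      (fun x _ => hV.differentiable one_ne_zero x)
    simpa [ContinuousLinearMap.integral_apply hint] using this
  calc ∫ x, divergence V x ∂μ = traceCLM E (∫ x, fderiv ℝ V x ∂μ) :=
        (traceCLM E).integral_comp_comm hint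
    _ = 0 := by rw [hzero, map_zero]

lemma exists_contDiff_cutoff (E : Type*) [NormedAddCommGroup E] [NormedSpace ℝ E]
    [FiniteDimensional ℝ E] : ∃ (χ : ℕ → E → ℝ) (C : ℝ),
      (∀ k, ContDiff ℝ 1 (χ k)) ∧ (∀ k, HasCompactSupport (χ k)) ∧ (∀ k x, |χ k x| ≤ 1) ∧
      (∀ x, ∀ᶠ k in atTop, χ k x = 1) ∧ ∀ k x, ‖fderiv ℝ (χ k) x‖ ≤ C * (k + 1 : ℝ)⁻¹ := by
  let φ : ContDiffBump (0 : E) := ⟨1, 2, one_pos, one_lt_two⟩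
  have hφ : ContDiff ℝ 1 φ := φ.contDiff
  obtain ⟨C, hC⟩ := (hφ.continuous_fderiv one_ne_zero).bounded_above_of_compact_support
    (φ.hasCompactSupport.fderiv ℝ)
  refine ⟨fun k x => φ ((k + 1 : ℝ)⁻¹ • x), C, fun k => hφ.comp (contDiff_const_smul _),
    fun k => φ.hasCompactSupport.comp_smul (by positivity), fun k x => ?_, fun x => ?_,
    fun k x => ?_⟩
  · rw [abs_of_nonneg φ.nonneg]
    exact φ.le_one
  · obtain ⟨N, hN⟩ := exists_nat_ge ‖x‖
    filter_upwards [eventually_ge_atTop N] with k hk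
    have hk' : (N : ℝ) ≤ k := by exact_mod_cast hk
    refine φ.one_of_mem_closedBall ?_
    rw [mem_closedBall_zero_iff, norm_smul, norm_inv, norm_of_nonneg (by positivity)]
    exact inv_mul_le_one_of_le₀ (by linarith) (by positivity)
  · have : fderiv ℝ (fun x => φ ((k + 1 : ℝ)⁻¹ • x)) x
        = (k + 1 : ℝ)⁻¹ • fderiv ℝ φ ((k + 1 : ℝ)⁻¹ • x) := fderiv_comp_smul _
    rw [this, norm_smul, norm_inv, norm_of_nonneg (by positivity), mul_comm]
    gcongr
    exact hC _

-- Gaffney: cut off at radius `k`; the error `Dχₖ(V)` is `O(1/k)` in `L¹`.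
theorem integral_divergence_eq_zero {V : E → E} (hV : ContDiff ℝ 1 V) (hint : Integrable V μ)
    (hdiv : Integrable (divergence V) μ) : ∫ x, divergence V x ∂μ = 0 := by
  obtain ⟨χ, C, hχ, hsupp, hχ_le, hχ_one, hχ_deriv⟩ := exists_contDiff_cutoff E
  have hdiv_int (k) : Integrable (fun x => χ k x * divergence V x) μ :=
    hdiv.bdd_mul (c := 1) (hχ k).continuous.aestronglyMeasurable (.of_forall (hχ_le k))
  have hderiv_le (k x) : ‖fderiv ℝ (χ k) x (V x)‖ ≤ C * (k + 1 : ℝ)⁻¹ * ‖V x‖ :=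
    (fderiv ℝ (χ k) x).le_of_opNorm_le (hχ_deriv k x) _
  have hderiv_int (k) : Integrable (fun x => fderiv ℝ (χ k) x (V x)) μ :=
    (hint.norm.const_mul _).mono'
      (((hχ k).continuous_fderiv one_ne_zero).clm_apply hV.continuous).aestronglyMeasurable
      (.of_forall (hderiv_le k))
  have hcutoff (k) : ∫ x, χ k x * divergence V x ∂μ = -∫ x, fderiv ℝ (χ k) x (V x) ∂μ := by
    rw [eq_neg_iff_add_eq_zero, ← integral_add (hdiv_int k) (hderiv_int k),
      ← integral_divergence_eq_zero_of_hasCompactSupport (μ := μ) ((hχ k).smul hV)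
        ((hsupp k).smul_right)]
    refine integral_congr_ae (.of_forall fun x => (divergence_smul ?_ ?_).symm)
    exacts [(hχ k).differentiable one_ne_zero x, hV.differentiable one_ne_zero x]
  have hlim_div : Tendsto (fun k => ∫ x, χ k x * divergence V x ∂μ) atTop
      (𝓝 (∫ x, divergence V x ∂μ)) := by
    refine tendsto_integral_of_dominated_convergence (fun x => ‖divergence V x‖)
      (fun k => (hdiv_int k).aestronglyMeasurable) hdiv.norm (fun k => .of_forall fun x => ?_)
      (.of_forall fun x => tendsto_const_nhds.congr' ?_)
    · rw [norm_mul]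
      exact mul_le_of_le_one_left (norm_nonneg _) (hχ_le k x)
    · filter_upwards [hχ_one x] with k hk
      rw [hk, one_mul]
  have hlim_error : Tendsto (fun k => ∫ x, fderiv ℝ (χ k) x (V x) ∂μ) atTop (𝓝 0) := by
    have hrate : Tendsto (fun k : ℕ => C * (k + 1 : ℝ)⁻¹ * ∫ x, ‖V x‖ ∂μ) atTop (𝓝 0) := by
      simpa using (tendsto_one_div_add_atTop_nhds_zero_nat.const_mul C).mul_const
        (∫ x, ‖V x‖ ∂μ)
    refine squeeze_zero_norm (fun k => ?_) hrate
    rw [← integral_const_mul]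
    exact norm_integral_le_of_norm_le (hint.norm.const_mul _) (.of_forall (hderiv_le k))
  refine tendsto_nhds_unique hlim_div ?_
  simpa only [hcutoff, neg_zero] using hlim_error.neg

end Divergence

section PolynomialGrowth

variable {E T G H K : Type*} [NormedAddCommGroup E]
  [NormedAddCommGroup G] [NormedAddCommGroup H] [NormedAddCommGroup K]
  {I : Set T} {f : E → T → G} {g : E → T → H}

/-- Polynomial growth of `x ↦ f x t`, uniformly in `t ∈ I`. Continuity in `x` is included so that
a Gaussian times such a function is integrable in `x`. -/
structure HasPolyGrowthOn (I : Set T) (f : E → T → G) : Prop where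
  continuous : ∀ t ∈ I, Continuous fun x => f x t
  bound : ∃ (C : ℝ) (k : ℕ), ∀ x, ∀ t ∈ I, ‖f x t‖ ≤ C * (1 + ‖x‖) ^ k

namespace HasPolyGrowthOn

lemma of_bounded {C : ℝ} (hc : ∀ t ∈ I, Continuous fun x => f x t)
    (h : ∀ x, ∀ t ∈ I, ‖f x t‖ ≤ C) : HasPolyGrowthOn I f :=
  ⟨hc, C, 0, by simpa only [pow_zero, mul_one] using h⟩

lemma congr {g : E → T → G} (hg : HasPolyGrowthOn I g) (h : ∀ t ∈ I, ∀ x, f x t = g x t) :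
    HasPolyGrowthOn I f := by
  obtain ⟨hgc, C, k, hC⟩ := hg
  refine ⟨fun t ht => ?_, C, k, fun x t ht => ?_⟩
  · simpa only [h t ht] using hgc t ht
  · simpa only [h t ht] using hC x t ht

lemma const (c : G) : HasPolyGrowthOn I fun (_ : E) _ => c :=
  of_bounded (fun _ _ => continuous_const) fun _ _ _ => le_rfl

lemma sub_const (y : E) : HasPolyGrowthOn I fun x _ => x - y := by
  refine ⟨fun _ _ => by fun_prop, 1 + ‖y‖, 1, fun x _ _ => ?_⟩
  nlinarith [norm_sub_le x y, mul_nonneg (norm_nonneg x) (norm_nonneg y)]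

lemma add {g : E → T → G} (hf : HasPolyGrowthOn I f) (hg : HasPolyGrowthOn I g) :
    HasPolyGrowthOn I fun x t => f x t + g x t := by
  obtain ⟨hfc, A, k, hA⟩ := hf
  obtain ⟨hgc, B, l, hB⟩ := hg
  refine ⟨fun t ht => (hfc t ht).add (hgc t ht), |A| + |B|, k + l, fun x t ht => ?_⟩
  have hx : (1 : ℝ) ≤ 1 + ‖x‖ := le_add_of_nonneg_right (norm_nonneg x)
  calc ‖f x t + g x t‖ ≤ A * (1 + ‖x‖) ^ k + B * (1 + ‖x‖) ^ l :=
        norm_add_le_of_le (hA x t ht) (hB x t ht)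
    _ ≤ |A| * (1 + ‖x‖) ^ (k + l) + |B| * (1 + ‖x‖) ^ (k + l) := by
        gcongr
        exacts [le_abs_self A, Nat.le_add_right k l, le_abs_self B, Nat.le_add_left l k]
    _ = (|A| + |B|) * (1 + ‖x‖) ^ (k + l) := (add_mul _ _ _).symm

variable [NormedSpace ℝ G] [NormedSpace ℝ H] [NormedSpace ℝ K]

lemma bilinear (B : G →L[ℝ] H →L[ℝ] K) (hf : HasPolyGrowthOn I f) (hg : HasPolyGrowthOn I g) :
    HasPolyGrowthOn I fun x t => B (f x t) (g x t) := by
  obtain ⟨hfc, C, k, hC⟩ := hf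
  obtain ⟨hgc, D, l, hD⟩ := hg
  refine ⟨fun t ht => (B.continuous.comp (hfc t ht)).clm_apply (hgc t ht), ‖B‖ * C * D, k + l,
    fun x t ht => ?_⟩
  calc ‖B (f x t) (g x t)‖ ≤ ‖B‖ * ‖f x t‖ * ‖g x t‖ := B.le_opNorm₂ _ _
    _ ≤ ‖B‖ * (C * (1 + ‖x‖) ^ k) * (D * (1 + ‖x‖) ^ l) := by
        have := (norm_nonneg _).trans (hC x t ht)
        gcongr
        exacts [hC x t ht, hD x t ht]
    _ = ‖B‖ * C * D * (1 + ‖x‖) ^ (k + l) := by ring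

lemma smul {f : E → T → ℝ} (hf : HasPolyGrowthOn I f) (hg : HasPolyGrowthOn I g) :
    HasPolyGrowthOn I fun x t => f x t • g x t :=
  hf.bilinear (ContinuousLinearMap.lsmul ℝ ℝ) hg

lemma const_smul (c : ℝ) (hf : HasPolyGrowthOn I f) : HasPolyGrowthOn I fun x t => c • f x t :=
  (const c).smul hf

lemma sub {g : E → T → G} (hf : HasPolyGrowthOn I f) (hg : HasPolyGrowthOn I g) :
    HasPolyGrowthOn I fun x t => f x t - g x t := by
  simpa only [neg_smul, one_smul, sub_eq_add_neg] using hf.add (hg.const_smul (-1))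

lemma inner {V : Type*} [NormedAddCommGroup V] [InnerProductSpace ℝ V] {f g : E → T → V}
    (hf : HasPolyGrowthOn I f) (hg : HasPolyGrowthOn I g) :
    HasPolyGrowthOn I fun x t => ⟪f x t, g x t⟫ :=
  hf.bilinear (innerSL ℝ) hg

lemma norm_sq {V : Type*} [NormedAddCommGroup V] [InnerProductSpace ℝ V] {f : E → T → V}
    (hf : HasPolyGrowthOn I f) : HasPolyGrowthOn I fun x t => ‖f x t‖ ^ 2 := by
  simpa only [real_inner_self_eq_norm_sq] using hf.inner hf

end HasPolyGrowthOn

end PolynomialGrowth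

section GaussianIntegrals

-- Completing the square turns `exp (1 + r - b r²)` into the constant `exp (1 + 1 / (4b))`.
lemma one_add_pow_mul_exp_neg_mul_sq_le {b r : ℝ} (hb : 0 < b) (hr : 0 ≤ r) (k : ℕ) :
    (1 + r) ^ k * exp (-b * r ^ 2) ≤ k.factorial * exp (1 + 1 / (4 * b)) := by
  have hpow : (1 + r) ^ k ≤ k.factorial * exp (1 + r) := by
    have := pow_div_factorial_le_exp (1 + r) (by linarith) k
    rwa [div_le_iff₀' (by positivity)] at this
  have hsquare : b * (r - 1 / (2 * b)) ^ 2 = b * r ^ 2 - r + 1 / (4 * b) := by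
    field_simp
    ring
  have hexponent : 1 + r + -b * r ^ 2 ≤ 1 + 1 / (4 * b) := by
    linarith [mul_nonneg hb.le (sq_nonneg (r - 1 / (2 * b)))]
  calc (1 + r) ^ k * exp (-b * r ^ 2) ≤ k.factorial * exp (1 + r) * exp (-b * r ^ 2) := by gcongr
    _ = k.factorial * exp (1 + r + -b * r ^ 2) := by rw [mul_assoc, ← exp_add]
    _ ≤ k.factorial * exp (1 + 1 / (4 * b)) := by gcongr

variable {E : Type*} [NormedAddCommGroup E] [NormedSpace ℝ E] [FiniteDimensional ℝ E]
  [MeasurableSpace E] [BorelSpace E] {μ : Measure E} [μ.IsAddHaarMeasure]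

lemma integrable_one_add_norm_pow_mul_exp_neg_mul_sq {b : ℝ} (hb : 0 < b) (k : ℕ) :
    Integrable (fun x : E => (1 + ‖x‖) ^ k * exp (-b * ‖x‖ ^ 2)) μ := by
  set d := finrank ℝ E + 1
  have hd : Integrable (fun x : E => (1 + ‖x‖) ^ (-(d : ℝ))) μ :=
    integrable_one_add_norm (by simp [d])
  refine (hd.const_mul ((k + d).factorial * exp (1 + 1 / (4 * b)))).mono'
    (by fun_prop) (.of_forall fun x => ?_)
  have hx : 0 < 1 + ‖x‖ := by positivity
  rw [norm_of_nonneg (by positivity), Real.rpow_neg hx.le, Real.rpow_natCast, ← div_eq_mul_inv,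
    le_div_iff₀ (by positivity)]
  calc _ = (1 + ‖x‖) ^ (k + d) * exp (-b * ‖x‖ ^ 2) := by ring
    _ ≤ _ := one_add_pow_mul_exp_neg_mul_sq_le hb (norm_nonneg x) _

end GaussianIntegrals

section BackwardHeatKernel

variable {n : ℕ} {y : EuclideanSpace ℝ (Fin n)} {s τ : ℝ}

lemma gaussianDensity_nonneg (y : EuclideanSpace ℝ (Fin n)) (hτ : 0 ≤ τ)
    (x : EuclideanSpace ℝ (Fin n)) : 0 ≤ gaussianDensity n y τ x := by
  unfold gaussianDensity
  positivity

lemma contDiff_gaussianDensity (y : EuclideanSpace ℝ (Fin n)) (τ : ℝ) :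
    ContDiff ℝ 1 (gaussianDensity n y τ) := by
  unfold gaussianDensity
  simp only [dist_eq_norm]
  exact contDiff_const.mul (((contDiff_id.sub contDiff_const).norm_sq ℝ).neg.div_const _).exp

lemma fderiv_gaussianDensity (x v : EuclideanSpace ℝ (Fin n)) :
    fderiv ℝ (gaussianDensity n y τ) x v
      = gaussianDensity n y τ x * (-(1 / (2 * τ)) * ⟪x - y, v⟫) := by
  have hsq : HasFDerivAt (fun x => ‖x - y‖ ^ 2) (2 • innerSL ℝ (x - y)) x :=
    ((hasFDerivAt_id x).sub_const y).norm_sq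
  have hρ := (hsq.fun_neg.mul_const (4 * τ)⁻¹).exp.const_mul
    ((4 * π * τ) ^ (-(((n : ℝ) - 1) / 2)))
  simp only [← div_eq_mul_inv, ← dist_eq_norm] at hρ
  rw [HasFDerivAt.fderiv (f := gaussianDensity n y τ) hρ, gaussianDensity]
  simp only [_root_.smul_apply, _root_.neg_apply, innerSL_apply_apply,
    smul_eq_mul, nsmul_eq_mul]
  ring

lemma hasDerivAt_gaussianDensity (x : EuclideanSpace ℝ (Fin n)) (hτ : 0 < τ) :
    HasDerivAt (fun τ => gaussianDensity n y τ x)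
      (gaussianDensity n y τ x
        * (‖x - y‖ ^ 2 * (1 / (2 * τ)) ^ 2 - ((n : ℝ) - 1) * (1 / (2 * τ)))) τ := by
  have hpow := ((hasDerivAt_id' τ).const_mul (4 * π)).rpow_const (p := -(((n : ℝ) - 1) / 2))
    (Or.inl (by positivity))
  have hexp := ((hasDerivAt_const τ (-dist x y ^ 2)).fun_div ((hasDerivAt_id' τ).const_mul 4)
    (by positivity)).exp
  refine (hpow.fun_mul hexp).congr_deriv ?_
  simp only [gaussianDensity, dist_eq_norm]
  rw [Real.rpow_sub_one (by positivity)]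
  field_simp
  ring

lemma exists_gaussianDensity_le (y : EuclideanSpace ℝ (Fin n)) (hs : 0 < s) (M : ℝ) :
    ∃ c, ∀ τ ∈ Icc s M, ∀ x,
      gaussianDensity n y τ x ≤ c * exp (-(1 / (4 * M)) * ‖x - y‖ ^ 2) := by
  have hcont : ContinuousOn (fun τ : ℝ => (4 * π * τ) ^ (-(((n : ℝ) - 1) / 2))) (Icc s M) :=
    ContinuousOn.rpow_const (by fun_prop) fun τ hτ =>
      Or.inl (by have := hs.trans_le hτ.1; positivity)
  obtain ⟨c, hc⟩ := isCompact_Icc.exists_bound_of_continuousOn hcont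
  refine ⟨c, fun τ hτ x => ?_⟩
  have hτ_pos : 0 < τ := hs.trans_le hτ.1
  have hexp : exp (-dist x y ^ 2 / (4 * τ)) ≤ exp (-(1 / (4 * M)) * ‖x - y‖ ^ 2) := by
    rw [dist_eq_norm, neg_div, neg_mul, one_div_mul_eq_div]
    gcongr
    exact hτ.2
  exact mul_le_mul ((le_abs_self _).trans (hc τ hτ)) hexp (exp_pos _).le
    ((norm_nonneg _).trans (hc τ hτ))

variable {T G : Type*} [NormedAddCommGroup G] [NormedSpace ℝ G] {I : Set T}
  {f : EuclideanSpace ℝ (Fin n) → T → G}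

lemma HasPolyGrowthOn.exists_integrable_bound_gaussianDensity_smul (hf : HasPolyGrowthOn I f)
    (y : EuclideanSpace ℝ (Fin n)) (hs : 0 < s) {M : ℝ} (hM : 0 < M) :
    ∃ B : EuclideanSpace ℝ (Fin n) → ℝ, Integrable B ∧
      ∀ τ ∈ Icc s M, ∀ t ∈ I, ∀ x, ‖gaussianDensity n y τ x • f x t‖ ≤ B x := by
  obtain ⟨-, C, k, hC⟩ := hf
  obtain ⟨c, hc⟩ := exists_gaussianDensity_le y hs M
  set ψ := fun z : EuclideanSpace ℝ (Fin n) => (1 + ‖z‖) ^ k * exp (-(1 / (4 * M)) * ‖z‖ ^ 2)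
  have hψ : Integrable ψ := integrable_one_add_norm_pow_mul_exp_neg_mul_sq (by positivity) k
  refine ⟨fun x => c * |C| * (1 + ‖y‖) ^ k * ψ (x - y), (hψ.comp_sub_right y).const_mul _,
    fun τ hτ t ht x => ?_⟩
  have hρ := gaussianDensity_nonneg y (hs.le.trans hτ.1) x
  have hx : 1 + ‖x‖ ≤ (1 + ‖y‖) * (1 + ‖x - y‖) := by
    nlinarith [norm_le_norm_add_norm_sub' x y, mul_nonneg (norm_nonneg y) (norm_nonneg (x - y))]
  have hf_le : ‖f x t‖ ≤ |C| * ((1 + ‖y‖) * (1 + ‖x - y‖)) ^ k :=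
    (hC x t ht).trans (by gcongr; exact le_abs_self C)
  calc ‖gaussianDensity n y τ x • f x t‖ = gaussianDensity n y τ x * ‖f x t‖ := by
        rw [norm_smul, norm_of_nonneg hρ]
    _ ≤ c * exp (-(1 / (4 * M)) * ‖x - y‖ ^ 2) * (|C| * ((1 + ‖y‖) * (1 + ‖x - y‖)) ^ k) :=
        mul_le_mul (hc τ hτ x) hf_le (norm_nonneg _) (hρ.trans (hc τ hτ x))
    _ = c * |C| * (1 + ‖y‖) ^ k * ψ (x - y) := by simp only [ψ, mul_pow]; ring

lemma HasPolyGrowthOn.integrable_gaussianDensity_smul (hf : HasPolyGrowthOn I f)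
    (y : EuclideanSpace ℝ (Fin n)) (hτ : 0 < τ) {t : T} (ht : t ∈ I) :
    Integrable fun x => gaussianDensity n y τ x • f x t := by
  obtain ⟨B, hB, hle⟩ := hf.exists_integrable_bound_gaussianDensity_smul y hτ hτ
  exact hB.mono' ((contDiff_gaussianDensity y τ).continuous.smul
    (hf.continuous t ht)).aestronglyMeasurable
    (.of_forall (hle τ ⟨le_rfl, le_rfl⟩ t ht))

end BackwardHeatKernel

section ParametricIntegral

lemma integral_le_integral_of_deriv_nonpos {α : Type*} [MeasurableSpace α] {μ : Measure α}
    {t₁ t₂ : ℝ} (ht : t₁ ≤ t₂) {g g' : α → ℝ → ℝ} {B B' : α → ℝ} (hB : Integrable B μ)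
    (hB' : Integrable B' μ) (hg_le : ∀ t ∈ Icc t₁ t₂, ∀ x, ‖g x t‖ ≤ B x)
    (hg'_le : ∀ t ∈ Icc t₁ t₂, ∀ x, ‖g' x t‖ ≤ B' x)
    (hg_meas : ∀ t ∈ Icc t₁ t₂, AEStronglyMeasurable (fun x => g x t) μ)
    (hg'_meas : ∀ t ∈ Icc t₁ t₂, AEStronglyMeasurable (fun x => g' x t) μ)
    (hderiv : ∀ x, ∀ t ∈ Icc t₁ t₂, HasDerivAt (g x) (g' x t) t)
    (hnonpos : ∀ t ∈ Icc t₁ t₂, ∫ x, g' x t ∂μ ≤ 0) : ∫ x, g x t₂ ∂μ ≤ ∫ x, g x t₁ ∂μ := by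
  have hint : ∀ t ∈ Ioo t₁ t₂, HasDerivAt (fun t => ∫ x, g x t ∂μ) (∫ x, g' x t ∂μ) t := by
    intro t hIoo
    have hIcc := Ioo_subset_Icc_self hIoo
    refine (hasDerivAt_integral_of_dominated_loc_of_deriv_le (bound := B')
      (Ioo_mem_nhds hIoo.1 hIoo.2) ?_ (hB.mono' (hg_meas t hIcc) (.of_forall (hg_le t hIcc)))
      (hg'_meas t hIcc) (.of_forall fun x r hr => hg'_le r (Ioo_subset_Icc_self hr) x) hB'
      (.of_forall fun x r hr => hderiv x r (Ioo_subset_Icc_self hr))).2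
    filter_upwards [Ioo_mem_nhds hIoo.1 hIoo.2] with r hr
    exact hg_meas r (Ioo_subset_Icc_self hr)
  have hcont : ContinuousOn (fun t => ∫ x, g x t ∂μ) (Icc t₁ t₂) :=
    continuousOn_of_dominated hg_meas (fun t hIcc => .of_forall (hg_le t hIcc)) hB
      (.of_forall fun x t hIcc => (hderiv x t hIcc).continuousAt.continuousWithinAt)
  refine antitoneOn_of_hasDerivWithinAt_nonpos (f' := fun t => ∫ x, g' x t ∂μ) (convex_Icc t₁ t₂)
    hcont (fun t hIoo => ?_) (fun t hIoo => ?_) (left_mem_Icc.2 ht) (right_mem_Icc.2 ht) ht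
  · rw [interior_Icc] at hIoo
    exact (hint t hIoo).hasDerivWithinAt
  · exact hnonpos t (interior_subset hIoo)

end ParametricIntegral

section Gradient

variable {E : Type*} [NormedAddCommGroup E] [InnerProductSpace ℝ E] [CompleteSpace E]
  {v : E → ℝ} {x : E}

lemma contDiff_gradient {k m : ℕ∞ω} (hv : ContDiff ℝ m v) (hk : k + 1 ≤ m) :
    ContDiff ℝ k (∇ v) :=
  (InnerProductSpace.toDual ℝ E).symm.contDiff.comp (hv.fderiv_right hk)

lemma inner_fderiv_gradient (v : E → ℝ) (x a b : E) :
    ⟪fderiv ℝ (∇ v) x a, b⟫ = fderiv ℝ (fderiv ℝ v) x a b := by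
  let toDualL := (InnerProductSpace.toDual ℝ E).toContinuousLinearEquiv.toContinuousLinearMap
  have : fderiv ℝ (fderiv ℝ v) x = toDualL.comp (fderiv ℝ (∇ v) x) := by
    rw [← toDual_comp_gradient]
    exact (InnerProductSpace.toDual ℝ E).comp_fderiv
  rw [this]
  rfl

lemma inner_fderiv_gradient_comm (hv : ContDiffAt ℝ 2 v x) (a b : E) :
    ⟪fderiv ℝ (∇ v) x a, b⟫ = ⟪a, fderiv ℝ (∇ v) x b⟫ := by
  rw [real_inner_comm _ a, inner_fderiv_gradient, inner_fderiv_gradient]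
  exact hv.isSymmSndFDerivAt (by simp) a b

lemma norm_iteratedFDeriv_gradient (v : E → ℝ) (i : ℕ) (x : E) :
    ‖iteratedFDeriv ℝ i (∇ v) x‖ = ‖iteratedFDeriv ℝ (i + 1) v x‖ := by
  rw [← norm_iteratedFDeriv_fderiv]
  exact (InnerProductSpace.toDual ℝ E).symm.norm_iteratedFDeriv_comp_left (fderiv ℝ v) x i

lemma norm_iteratedFDeriv_divergence_gradient_le [FiniteDimensional ℝ E] {i : ℕ}
    (hv : ContDiff ℝ (i + 2) v) (x : E) :
    ‖iteratedFDeriv ℝ i (divergence (∇ v)) x‖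
      ≤ ‖traceCLM E‖ * ‖iteratedFDeriv ℝ (i + 2) v x‖ := by
  rw [← norm_iteratedFDeriv_gradient]
  exact norm_iteratedFDeriv_divergence_le (contDiff_gradient hv (by rw [add_assoc]; norm_num))

end Gradient

section EntropyFlux

variable {E : Type*} [NormedAddCommGroup E] [InnerProductSpace ℝ E] [CompleteSpace E]
  {ε q : ℝ} {F : ℝ → ℝ} {v w : E → ℝ} {x y : E}

/-- The Allen–Cahn energy density `(ε/2)|∇v|² + (1/ε)F(v)`. -/
noncomputable def energyDensity (ε : ℝ) (F : ℝ → ℝ) (v : E → ℝ) (x : E) : ℝ :=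
  ε / 2 * ‖∇ v x‖ ^ 2 + 1 / ε * F (v x)

/-- The discrepancy `(ε/2)|∇v|² - (1/ε)F(v)`, which measures the failure of equipartition of
energy. -/
noncomputable def discrepancy (ε : ℝ) (F : ℝ → ℝ) (v : E → ℝ) (x : E) : ℝ :=
  ε / 2 * ‖∇ v x‖ ^ 2 - 1 / ε * F (v x)

/-- The velocity of `v` corrected by the drift of a Gaussian `ρ` centred at `y`: if `w = ∂ₜv` and
`∇ρ = -q (x - y) ρ`, this is `∂ₜv + ρ⁻¹⟪∇ρ, ∇v⟫`. -/
noncomputable def driftedVelocity (q : ℝ) (y : E) (v w : E → ℝ) (x : E) : ℝ :=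
  w x - q * ⟪x - y, ∇ v x⟫

/-- The vector field whose divergence, weighted by the backward heat kernel, separates the rate of
change of the weighted energy into its sign-definite parts. -/
noncomputable def entropyFlux (ε : ℝ) (F : ℝ → ℝ) (q : ℝ) (y : E) (v w : E → ℝ) (x : E) : E :=
  (ε * driftedVelocity q y v w x) • ∇ v x + (q * energyDensity ε F v x) • (x - y)

lemma contDiff_energyDensity (hF : ContDiff ℝ 1 F) (hv : ContDiff ℝ 2 v) :
    ContDiff ℝ 1 (energyDensity ε F v) :=
  (contDiff_const.mul ((contDiff_gradient hv le_rfl).norm_sq ℝ)).add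
    (contDiff_const.mul (hF.comp (hv.of_le one_le_two)))

lemma contDiff_driftedVelocity (hv : ContDiff ℝ 2 v) (hw : ContDiff ℝ 1 w) :
    ContDiff ℝ 1 (driftedVelocity q y v w) :=
  hw.sub (contDiff_const.mul
    ((contDiff_id.sub contDiff_const).inner ℝ (contDiff_gradient hv le_rfl)))

lemma contDiff_entropyFlux (hF : ContDiff ℝ 1 F) (hv : ContDiff ℝ 2 v) (hw : ContDiff ℝ 1 w) :
    ContDiff ℝ 1 (entropyFlux ε F q y v w) :=
  ((contDiff_const.mul (contDiff_driftedVelocity hv hw)).smul (contDiff_gradient hv le_rfl)).add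
    ((contDiff_const.mul (contDiff_energyDensity hF hv)).smul (contDiff_id.sub contDiff_const))

lemma fderiv_energyDensity (hF : Differentiable ℝ F) (hv : ContDiff ℝ 2 v) (x z : E) :
    fderiv ℝ (energyDensity ε F v) x z
      = ε * ⟪∇ v x, fderiv ℝ (∇ v) x z⟫ + 1 / ε * (deriv F (v x) * ⟪∇ v x, z⟫) := by
  have hgrad := ((contDiff_gradient hv le_rfl).differentiable one_ne_zero x).hasFDerivAt
  have hpot := (hF (v x)).hasDerivAt.comp_hasFDerivAt x
    (hv.differentiable two_ne_zero x).hasFDerivAt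
  have := (hgrad.norm_sq.const_mul (ε / 2)).fun_add (hpot.const_mul (1 / ε))
  rw [HasFDerivAt.fderiv (f := energyDensity ε F v) this, inner_gradient_left (y := z)]
  simp only [_root_.add_apply, _root_.smul_apply, ContinuousLinearMap.comp_apply,
    innerSL_apply_apply, smul_eq_mul, nsmul_eq_mul]
  push_cast
  ring

lemma fderiv_driftedVelocity (hv : ContDiff ℝ 2 v) (hw : ContDiff ℝ 1 w) (x a : E) :
    fderiv ℝ (driftedVelocity q y v w) x a
      = ⟪∇ w x, a⟫ - q * (⟪x - y, fderiv ℝ (∇ v) x a⟫ + ⟪a, ∇ v x⟫) := by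
  have hgrad := ((contDiff_gradient hv le_rfl).differentiable one_ne_zero x).hasFDerivAt
  have := (hw.differentiable one_ne_zero x).hasFDerivAt.fun_sub
    ((((hasFDerivAt_id x).sub_const y).inner ℝ hgrad).const_mul q)
  rw [HasFDerivAt.fderiv (f := driftedVelocity q y v w) this, inner_gradient_left (y := a)]
  simp only [_root_.sub_apply, _root_.smul_apply, ContinuousLinearMap.comp_apply,
    ContinuousLinearMap.prod_apply, fderivInnerCLM_apply, ContinuousLinearMap.id_apply, id_eq,
    smul_eq_mul]

/-- The rate of change, along `∂ₜv = w`, of the energy density weighted by an `(n-1)`-dimensional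
backward heat kernel `ρ`, divided by `ρ`; here `q = 1 / (2τ)` for a kernel of scale `τ`. -/
noncomputable def weightedEnergyRate (ε : ℝ) (F : ℝ → ℝ) (q : ℝ) (y : E) (v w : E → ℝ) (x : E) :
    ℝ :=
  (((finrank ℝ E : ℝ) - 1) * q - ‖x - y‖ ^ 2 * q ^ 2) * energyDensity ε F v x
    + (ε * ⟪∇ v x, ∇ w x⟫ + 1 / ε * (deriv F (v x) * w x))

-- The Hessian terms of `D(driftedVelocity)` and `D(energyDensity)` cancel by symmetry.
theorem divergence_entropyFlux [FiniteDimensional ℝ E] (hε : ε ≠ 0) (hF : ContDiff ℝ 1 F)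
    (hv : ContDiff ℝ 2 v) (hw : ContDiff ℝ 1 w)
    (hpde : w x = divergence (∇ v) x - 1 / ε ^ 2 * deriv F (v x)) :
    divergence (entropyFlux ε F q y v w) x - q * ⟪x - y, entropyFlux ε F q y v w x⟫
      = weightedEnergyRate ε F q y v w x + ε * driftedVelocity q y v w x ^ 2
        - q * discrepancy ε F v x := by
  have hgrad := (contDiff_gradient hv le_rfl).differentiable one_ne_zero x
  have hφ := (contDiff_driftedVelocity (q := q) (y := y) hv hw).differentiable one_ne_zero x
  have he := (contDiff_energyDensity (ε := ε) hF hv).differentiable one_ne_zero x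
  have hcomm := inner_fderiv_gradient_comm (hv.contDiffAt (x := x)) (∇ v x) (x - y)
  have hdiv : divergence (entropyFlux ε F q y v w) x
      = ε * driftedVelocity q y v w x * divergence (∇ v) x
        + ε * fderiv ℝ (driftedVelocity q y v w) x (∇ v x)
        + (q * energyDensity ε F v x * finrank ℝ E
          + q * fderiv ℝ (energyDensity ε F v) x (x - y)) := by
    unfold entropyFlux
    rw [divergence_add ((hφ.const_mul ε).fun_smul hgrad) ((he.const_mul q).fun_smul (by fun_prop)),
      divergence_smul (hφ.const_mul ε) hgrad, divergence_smul (he.const_mul q) (by fun_prop),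
      divergence_sub_const, fderiv_const_mul hφ, fderiv_const_mul he]
    rfl
  have hlap : divergence (∇ v) x = w x + 1 / ε ^ 2 * deriv F (v x) := by rw [hpde]; ring
  rw [hdiv, fderiv_driftedVelocity hv hw, fderiv_energyDensity (hF.differentiable one_ne_zero) hv,
    hlap, real_inner_comm (fderiv ℝ (∇ v) x (∇ v x)), hcomm]
  simp only [entropyFlux, weightedEnergyRate, driftedVelocity, energyDensity, discrepancy,
    inner_add_right, inner_smul_right, real_inner_self_eq_norm_sq,
    real_inner_comm (∇ v x) (∇ w x), real_inner_comm (∇ v x) (x - y)]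
  field_simp
  ring

end EntropyFlux

section MonotonicityFormula

variable {n : ℕ} {ε τ : ℝ} {F : ℝ → ℝ} {v w : EuclideanSpace ℝ (Fin n) → ℝ}
  {y : EuclideanSpace ℝ (Fin n)}

lemma divergence_gaussianDensity_smul {V : EuclideanSpace ℝ (Fin n) → EuclideanSpace ℝ (Fin n)}
    {x : EuclideanSpace ℝ (Fin n)} (hV : DifferentiableAt ℝ V x) :
    divergence (fun x => gaussianDensity n y τ x • V x) x
      = gaussianDensity n y τ x * (divergence V x - 1 / (2 * τ) * ⟪x - y, V x⟫) := by
  rw [divergence_smul ((contDiff_gaussianDensity y τ).differentiable one_ne_zero x) hV,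
    fderiv_gaussianDensity]
  ring

theorem integral_gaussianDensity_mul_weightedEnergyRate (hε : ε ≠ 0) (hF : ContDiff ℝ 1 F)
    (hv : ContDiff ℝ 2 v) (hw : ContDiff ℝ 1 w)
    (hpde : ∀ x, w x = divergence (∇ v) x - 1 / ε ^ 2 * deriv F (v x))
    (hflux : Integrable fun x => gaussianDensity n y τ x • entropyFlux ε F (1 / (2 * τ)) y v w x)
    (hrate : Integrable fun x =>
      gaussianDensity n y τ x * weightedEnergyRate ε F (1 / (2 * τ)) y v w x)
    (hdissipation : Integrable fun x => gaussianDensity n y τ x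
      * (ε * driftedVelocity (1 / (2 * τ)) y v w x ^ 2 - 1 / (2 * τ) * discrepancy ε F v x)) :
    ∫ x, gaussianDensity n y τ x * weightedEnergyRate ε F (1 / (2 * τ)) y v w x
      = -∫ x, gaussianDensity n y τ x
        * (ε * driftedVelocity (1 / (2 * τ)) y v w x ^ 2 - 1 / (2 * τ) * discrepancy ε F v x) := by
  have hP := contDiff_entropyFlux (ε := ε) (q := 1 / (2 * τ)) (y := y) hF hv hw
  have hdiv : divergence
        (fun x => gaussianDensity n y τ x • entropyFlux ε F (1 / (2 * τ)) y v w x)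
      = fun x => gaussianDensity n y τ x * weightedEnergyRate ε F (1 / (2 * τ)) y v w x
        + gaussianDensity n y τ x * (ε * driftedVelocity (1 / (2 * τ)) y v w x ^ 2
          - 1 / (2 * τ) * discrepancy ε F v x) := by
    funext x
    rw [divergence_gaussianDensity_smul (hP.differentiable one_ne_zero x),
      divergence_entropyFlux hε hF hv hw (hpde x)]
    ring
  have hzero := integral_divergence_eq_zero ((contDiff_gaussianDensity y τ).fun_smul hP) hflux
    (hdiv ▸ hrate.add hdissipation)
  rwa [hdiv, integral_add hrate hdissipation, ← eq_neg_iff_add_eq_zero] at hzero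

end MonotonicityFormula

section TimeDerivatives

variable {E : Type*} [NormedAddCommGroup E] [NormedSpace ℝ E] {u : E → ℝ → ℝ} {m : ℕ∞ω}

lemma contDiff_space_slice (hu : ContDiff ℝ m (uncurry u)) (t : ℝ) :
    ContDiff ℝ m fun x => u x t :=
  hu.comp (contDiff_id.prodMk contDiff_const)

lemma hasDerivAt_time (hu : Differentiable ℝ (uncurry u)) (x : E) (t : ℝ) :
    HasDerivAt (u x) (fderiv ℝ (uncurry u) (x, t) (0, 1)) t :=
  (hu (x, t)).hasFDerivAt.comp_hasDerivAt t ((hasDerivAt_const t x).prodMk (hasDerivAt_id t))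

lemma fderiv_space_slice (hu : Differentiable ℝ (uncurry u)) (x : E) (t : ℝ) :
    fderiv ℝ (fun x => u x t) x
      = (fderiv ℝ (uncurry u) (x, t)).comp (ContinuousLinearMap.inl ℝ E ℝ) :=
  (HasFDerivAt.comp (g := uncurry u) (f := fun x => (x, t)) x (hu (x, t)).hasFDerivAt
    (hasFDerivAt_prodMk_left x t)).fderiv

lemma contDiff_time_deriv (hu : ContDiff ℝ (m + 1) (uncurry u)) (t : ℝ) :
    ContDiff ℝ m fun x => deriv (u x) t := by
  have hdiff : Differentiable ℝ (uncurry u) := hu.differentiable (by simp)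
  simp only [fun x => (hasDerivAt_time hdiff x t).deriv]
  exact ((hu.fderiv_right le_rfl).comp (contDiff_id.prodMk contDiff_const)).clm_apply
    contDiff_const

lemma hasDerivAt_fderiv_space_slice (hu : ContDiff ℝ 2 (uncurry u)) (x : E) (t : ℝ) :
    HasDerivAt (fun t => fderiv ℝ (fun x => u x t) x) (fderiv ℝ (fun x => deriv (u x) t) x) t := by
  have hdiff : Differentiable ℝ (uncurry u) := hu.differentiable two_ne_zero
  have hD : ContDiff ℝ 1 (fderiv ℝ (uncurry u)) := hu.fderiv_right le_rfl
  have hD2 : HasFDerivAt (fderiv ℝ (uncurry u)) (fderiv ℝ (fderiv ℝ (uncurry u)) (x, t)) (x, t) :=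
    (hD.differentiable one_ne_zero (x, t)).hasFDerivAt
  have htime := hD2.comp_hasDerivAt t ((hasDerivAt_const t x).prodMk (hasDerivAt_id t))
  have hspace : HasFDerivAt (fun x => fderiv ℝ (uncurry u) (x, t))
      ((fderiv ℝ (fderiv ℝ (uncurry u)) (x, t)).comp (ContinuousLinearMap.inl ℝ E ℝ)) x :=
    HasFDerivAt.comp (f := fun x => (x, t)) x hD2 (hasFDerivAt_prodMk_left x t)
  simp only [fderiv_space_slice hdiff, fun x => (hasDerivAt_time hdiff x t).deriv]
  refine (htime.clm_comp (hasDerivAt_const t (ContinuousLinearMap.inl ℝ E ℝ))).congr_deriv ?_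
  rw [(hspace.clm_apply (hasFDerivAt_const ((0, 1) : E × ℝ) x)).fderiv]
  ext a
  have := (hu.contDiffAt (x := (x, t))).isSymmSndFDerivAt (by simp) (0, 1) (a, 0)
  simpa using this

end TimeDerivatives

section EnergyTimeDerivative

variable {E : Type*} [NormedAddCommGroup E] [InnerProductSpace ℝ E] [CompleteSpace E]
  {ε : ℝ} {F : ℝ → ℝ}

lemma hasDerivAt_gradient_space_slice {u : E → ℝ → ℝ} (hu : ContDiff ℝ 2 (uncurry u)) (x : E)
    (t : ℝ) :
    HasDerivAt (fun t => ∇ (fun x => u x t) x) (∇ (fun x => deriv (u x) t) x) t :=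
  (InnerProductSpace.toDual ℝ E).symm.toContinuousLinearEquiv.toContinuousLinearMap.hasFDerivAt
    |>.comp_hasDerivAt t (hasDerivAt_fderiv_space_slice hu x t)

lemma hasDerivAt_energyDensity {u : E → ℝ → ℝ} (hF : Differentiable ℝ F)
    (hu : ContDiff ℝ 2 (uncurry u)) (x : E) (t : ℝ) :
    HasDerivAt (fun t => energyDensity ε F (fun x => u x t) x)
      (ε * ⟪∇ (fun x => u x t) x, ∇ (fun x => deriv (u x) t) x⟫
        + 1 / ε * (deriv F (u x t) * deriv (u x) t)) t := by
  have hut : HasDerivAt (u x) (deriv (u x) t) t :=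
    (hasDerivAt_time (hu.differentiable two_ne_zero) x t).differentiableAt.hasDerivAt
  have hpot := (hF (u x t)).hasDerivAt.comp t hut
  refine (((hasDerivAt_gradient_space_slice hu x t).norm_sq.const_mul (ε / 2)).fun_add
    (hpot.const_mul (1 / ε))).congr_deriv ?_
  ring

lemma hasDerivAt_gaussianDensity_mul_energyDensity {n : ℕ}
    {u : EuclideanSpace ℝ (Fin n) → ℝ → ℝ} (hF : Differentiable ℝ F)
    (hu : ContDiff ℝ 2 (uncurry u)) (y x : EuclideanSpace ℝ (Fin n)) {c t : ℝ} (ht : t < c) :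
    HasDerivAt (fun t => gaussianDensity n y (c - t) x * energyDensity ε F (fun x => u x t) x)
      (gaussianDensity n y (c - t) x * weightedEnergyRate ε F (1 / (2 * (c - t))) y
        (fun x => u x t) (fun x => deriv (u x) t) x) t := by
  have hρ := (hasDerivAt_gaussianDensity (y := y) x (sub_pos.2 ht)).comp t
    ((hasDerivAt_id t).const_sub c)
  refine (hρ.fun_mul (hasDerivAt_energyDensity hF hu x t)).congr_deriv ?_
  simp only [weightedEnergyRate, finrank_euclideanSpace_fin, comp_apply]
  ring

end EnergyTimeDerivative

section Flow

variable {E : Type*} [NormedAddCommGroup E] [InnerProductSpace ℝ E] [CompleteSpace E]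
  {ε : ℝ} {F : ℝ → ℝ} {u : E → ℝ → ℝ} {I : Set ℝ} {q : ℝ → ℝ} {y : E}

/-- A solution of `∂ₜu = Δu - ε⁻² F'(u)` at the times in `I` whose spatial derivatives up to order
three are bounded uniformly on `E × I`. The Laplacian is written as `div ∇`. -/
structure IsBoundedAllenCahnFlow (ε : ℝ) (F : ℝ → ℝ) (u : E → ℝ → ℝ) (I : Set ℝ) : Prop where
  contDiff : ContDiff ℝ 3 (uncurry u)
  deriv_eq : ∀ t ∈ I, ∀ x,
    deriv (u x) t = divergence (∇ fun x => u x t) x - 1 / ε ^ 2 * deriv F (u x t)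
  bound : ∃ C, ∀ x, ∀ t ∈ I, ∀ i ≤ 3, ‖iteratedFDeriv ℝ i (fun x => u x t) x‖ ≤ C

namespace IsBoundedAllenCahnFlow

lemma contDiff_slice (h : IsBoundedAllenCahnFlow ε F u I) (t : ℝ) : ContDiff ℝ 3 fun x => u x t :=
  contDiff_space_slice h.contDiff t

lemma contDiff_deriv (h : IsBoundedAllenCahnFlow ε F u I) (t : ℝ) :
    ContDiff ℝ 1 fun x => deriv (u x) t :=
  contDiff_time_deriv (h.contDiff.of_le (by norm_num)) t

lemma contDiff_gradient (h : IsBoundedAllenCahnFlow ε F u I) (t : ℝ) :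
    ContDiff ℝ 2 (∇ fun x => u x t) :=
  AllenCahn.contDiff_gradient (h.contDiff_slice t) le_rfl

lemma hasPolyGrowthOn_comp {G : Type*} [NormedAddCommGroup G] {f : ℝ → G}
    (h : IsBoundedAllenCahnFlow ε F u I) (hf : Continuous f) :
    HasPolyGrowthOn I fun x t => f (u x t) := by
  obtain ⟨C, hC⟩ := h.bound
  obtain ⟨M, hM⟩ := (isCompact_closedBall (0 : ℝ) C).exists_bound_of_continuousOn hf.continuousOn
  refine .of_bounded (fun t _ => hf.comp (h.contDiff_slice t).continuous) fun x t ht => hM _ ?_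
  rw [mem_closedBall_zero_iff, ← norm_iteratedFDeriv_zero (𝕜 := ℝ) (f := fun x => u x t)]
  exact hC x t ht 0 (by norm_num)

lemma hasPolyGrowthOn_gradient (h : IsBoundedAllenCahnFlow ε F u I) :
    HasPolyGrowthOn I fun x t => ∇ (fun x => u x t) x := by
  obtain ⟨C, hC⟩ := h.bound
  refine .of_bounded (C := C) (fun t _ => (h.contDiff_gradient t).continuous) fun x t ht => ?_
  rw [← norm_iteratedFDeriv_zero (𝕜 := ℝ) (f := ∇ fun x => u x t), norm_iteratedFDeriv_gradient]
  exact hC x t ht 1 (by norm_num)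

lemma hasPolyGrowthOn_energyDensity (h : IsBoundedAllenCahnFlow ε F u I) (hF : Continuous F) :
    HasPolyGrowthOn I fun x t => energyDensity ε F (fun x => u x t) x :=
  (h.hasPolyGrowthOn_gradient.norm_sq.const_smul (ε / 2)).add
    ((h.hasPolyGrowthOn_comp hF).const_smul (1 / ε))

lemma hasPolyGrowthOn_discrepancy (h : IsBoundedAllenCahnFlow ε F u I) (hF : Continuous F) :
    HasPolyGrowthOn I fun x t => discrepancy ε F (fun x => u x t) x :=
  (h.hasPolyGrowthOn_gradient.norm_sq.const_smul (ε / 2)).sub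
    ((h.hasPolyGrowthOn_comp hF).const_smul (1 / ε))

variable [FiniteDimensional ℝ E]

lemma hasPolyGrowthOn_divergence_gradient (h : IsBoundedAllenCahnFlow ε F u I) :
    HasPolyGrowthOn I fun x t => divergence (∇ fun x => u x t) x := by
  obtain ⟨C, hC⟩ := h.bound
  refine .of_bounded (C := ‖traceCLM E‖ * C)
    (fun t _ => (contDiff_divergence (k := 1) (h.contDiff_gradient t) le_rfl).continuous)
    fun x t ht => ?_
  rw [← norm_iteratedFDeriv_zero (𝕜 := ℝ) (f := divergence _)]
  refine (norm_iteratedFDeriv_divergence_gradient_le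
    ((h.contDiff_slice t).of_le (by norm_num)) x).trans ?_
  gcongr
  exact hC x t ht 2 (by norm_num)

lemma hasPolyGrowthOn_gradient_divergence_gradient (h : IsBoundedAllenCahnFlow ε F u I) :
    HasPolyGrowthOn I fun x t => ∇ (divergence (∇ fun x => u x t)) x := by
  obtain ⟨C, hC⟩ := h.bound
  have hlap (t : ℝ) : ContDiff ℝ 1 (divergence (∇ fun x => u x t)) :=
    contDiff_divergence (h.contDiff_gradient t) le_rfl
  refine .of_bounded (C := ‖traceCLM E‖ * C)
    (fun t _ => (AllenCahn.contDiff_gradient (hlap t) (zero_add 1).le).continuous) fun x t ht => ?_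
  rw [← norm_iteratedFDeriv_zero (𝕜 := ℝ) (f := ∇ _), norm_iteratedFDeriv_gradient]
  refine (norm_iteratedFDeriv_divergence_gradient_le
    ((h.contDiff_slice t).of_le (by norm_num)) x).trans ?_
  gcongr
  exact hC x t ht 3 le_rfl

lemma hasPolyGrowthOn_deriv (h : IsBoundedAllenCahnFlow ε F u I) (hF : ContDiff ℝ 1 F) :
    HasPolyGrowthOn I fun x t => deriv (u x) t :=
  (h.hasPolyGrowthOn_divergence_gradient.sub
    ((h.hasPolyGrowthOn_comp hF.continuous_deriv_one).const_smul (1 / ε ^ 2))).congr h.deriv_eq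

lemma gradient_deriv (h : IsBoundedAllenCahnFlow ε F u I) (hF : ContDiff ℝ 2 F) {t : ℝ}
    (ht : t ∈ I) (x : E) :
    ∇ (fun x => deriv (u x) t) x = ∇ (divergence (∇ fun x => u x t)) x
      - (1 / ε ^ 2) • deriv (deriv F) (u x t) • ∇ (fun x => u x t) x := by
  have hu := ((h.contDiff_slice t).differentiable three_ne_zero x).hasFDerivAt
  have hlap := ((contDiff_divergence (h.contDiff_gradient t) le_rfl).differentiable
    one_ne_zero x).hasFDerivAt
  have hF' : HasDerivAt (deriv F) (deriv (deriv F) (u x t)) (u x t) :=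
    ((hF.deriv' (n := 1)).differentiable one_ne_zero _).hasDerivAt
  have hw := hlap.fun_sub ((hF'.comp_hasFDerivAt x hu).const_mul (1 / ε ^ 2))
  refine ext_inner_right ℝ fun a => ?_
  rw [inner_gradient_left, funext (h.deriv_eq t ht),
    HasFDerivAt.fderiv (f := fun x => divergence (∇ fun x => u x t) x - 1 / ε ^ 2 * deriv F (u x t))
      hw]
  simp only [inner_sub_left, real_inner_smul_left, inner_gradient_left, _root_.sub_apply,
    _root_.smul_apply, smul_eq_mul]

lemma hasPolyGrowthOn_gradient_deriv (h : IsBoundedAllenCahnFlow ε F u I) (hF : ContDiff ℝ 2 F) :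
    HasPolyGrowthOn I fun x t => ∇ (fun x => deriv (u x) t) x :=
  (h.hasPolyGrowthOn_gradient_divergence_gradient.sub
    (((h.hasPolyGrowthOn_comp (hF.deriv' (n := 1)).continuous_deriv_one).smul
      h.hasPolyGrowthOn_gradient).const_smul (1 / ε ^ 2))).congr
    fun _ ht => h.gradient_deriv hF ht

lemma hasPolyGrowthOn_driftedVelocity (h : IsBoundedAllenCahnFlow ε F u I) (hF : ContDiff ℝ 1 F)
    (hq : HasPolyGrowthOn I fun (_ : E) t => q t) (y : E) :
    HasPolyGrowthOn I fun x t =>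
      driftedVelocity (q t) y (fun x => u x t) (fun x => deriv (u x) t) x :=
  (h.hasPolyGrowthOn_deriv hF).sub
    (hq.smul ((HasPolyGrowthOn.sub_const y).inner h.hasPolyGrowthOn_gradient))

lemma hasPolyGrowthOn_entropyFlux (h : IsBoundedAllenCahnFlow ε F u I) (hF : ContDiff ℝ 1 F)
    (hq : HasPolyGrowthOn I fun (_ : E) t => q t) (y : E) :
    HasPolyGrowthOn I fun x t =>
      entropyFlux ε F (q t) y (fun x => u x t) (fun x => deriv (u x) t) x :=
  (((h.hasPolyGrowthOn_driftedVelocity hF hq y).const_smul ε).smul h.hasPolyGrowthOn_gradient).add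
    ((hq.smul (h.hasPolyGrowthOn_energyDensity hF.continuous)).smul (.sub_const y))

lemma hasPolyGrowthOn_weightedEnergyRate (h : IsBoundedAllenCahnFlow ε F u I)
    (hF : ContDiff ℝ 2 F) (hq : HasPolyGrowthOn I fun (_ : E) t => q t) (y : E) :
    HasPolyGrowthOn I fun x t =>
      weightedEnergyRate ε F (q t) y (fun x => u x t) (fun x => deriv (u x) t) x := by
  have hF1 : ContDiff ℝ 1 F := hF.of_le one_le_two
  have hscale : HasPolyGrowthOn I fun x t =>
      ((finrank ℝ E : ℝ) - 1) * q t - ‖x - y‖ ^ 2 * q t ^ 2 := by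
    simpa only [smul_eq_mul, pow_two (q _)] using (hq.const_smul ((finrank ℝ E : ℝ) - 1)).sub
      ((HasPolyGrowthOn.sub_const y).norm_sq.smul (hq.smul hq))
  exact (hscale.smul (h.hasPolyGrowthOn_energyDensity hF1.continuous)).add
    (((h.hasPolyGrowthOn_gradient.inner (h.hasPolyGrowthOn_gradient_deriv hF)).const_smul ε).add
      (((h.hasPolyGrowthOn_comp hF1.continuous_deriv_one).smul
        (h.hasPolyGrowthOn_deriv hF1)).const_smul (1 / ε)))

lemma hasPolyGrowthOn_dissipation (h : IsBoundedAllenCahnFlow ε F u I) (hF : ContDiff ℝ 1 F)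
    (hq : HasPolyGrowthOn I fun (_ : E) t => q t) (y : E) :
    HasPolyGrowthOn I fun x t =>
      ε * driftedVelocity (q t) y (fun x => u x t) (fun x => deriv (u x) t) x ^ 2
        - q t * discrepancy ε F (fun x => u x t) x := by
  have hφ := h.hasPolyGrowthOn_driftedVelocity hF hq y
  simpa only [smul_eq_mul, ← pow_two] using ((hφ.smul hφ).const_smul ε).sub
    (hq.smul (h.hasPolyGrowthOn_discrepancy hF.continuous))

end IsBoundedAllenCahnFlow

end Flow

section WeightedEnergy

variable {n : ℕ} {ε s t₁ t₂ : ℝ} {F : ℝ → ℝ} {u : EuclideanSpace ℝ (Fin n) → ℝ → ℝ}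
  {I : Set ℝ} {y : EuclideanSpace ℝ (Fin n)}

namespace IsBoundedAllenCahnFlow

lemma integral_gaussianDensity_mul_weightedEnergyRate_nonpos (h : IsBoundedAllenCahnFlow ε F u I)
    (hF : ContDiff ℝ 2 F) (hε : 0 < ε) {t τ : ℝ} (ht : t ∈ I) (hτ : 0 < τ)
    (hdisc : ∀ x, discrepancy ε F (fun x => u x t) x ≤ 0) :
    ∫ x, gaussianDensity n y τ x * weightedEnergyRate ε F (1 / (2 * τ)) y (fun x => u x t)
      (fun x => deriv (u x) t) x ≤ 0 := by
  have hF1 : ContDiff ℝ 1 F := hF.of_le one_le_two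
  have hq : HasPolyGrowthOn I fun (_ : EuclideanSpace ℝ (Fin n)) (_ : ℝ) => 1 / (2 * τ) :=
    .const _
  rw [integral_gaussianDensity_mul_weightedEnergyRate hε.ne' hF1
    ((h.contDiff_slice t).of_le (by norm_num)) (h.contDiff_deriv t) (h.deriv_eq t ht)
    ((h.hasPolyGrowthOn_entropyFlux hF1 hq y).integrable_gaussianDensity_smul y hτ ht)
    ((h.hasPolyGrowthOn_weightedEnergyRate hF hq y).integrable_gaussianDensity_smul y hτ ht)
    ((h.hasPolyGrowthOn_dissipation hF1 hq y).integrable_gaussianDensity_smul y hτ ht)]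
  refine neg_nonpos.2 (integral_nonneg fun x => mul_nonneg (gaussianDensity_nonneg y hτ.le x) ?_)
  refine sub_nonneg.2 (le_trans ?_ (by positivity))
  exact mul_nonpos_of_nonneg_of_nonpos (by positivity) (hdisc x)

theorem integral_gaussianDensity_mul_energyDensity_le
    (h : IsBoundedAllenCahnFlow ε F u (Icc t₁ t₂)) (hF : ContDiff ℝ 2 F) (hε : 0 < ε)
    (hdisc : ∀ t ∈ Icc t₁ t₂, ∀ x, discrepancy ε F (fun x => u x t) x ≤ 0) (ht : t₁ ≤ t₂)
    (hs : 0 < s) (y : EuclideanSpace ℝ (Fin n)) :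
    ∫ x, gaussianDensity n y s x * energyDensity ε F (fun x => u x t₂) x
      ≤ ∫ x, gaussianDensity n y (s + (t₂ - t₁)) x * energyDensity ε F (fun x => u x t₁) x := by
  have hscale : ∀ t ∈ Icc t₁ t₂, s + t₂ - t ∈ Icc s (s + (t₂ - t₁)) :=
    fun t ht => ⟨by linarith [ht.2], by linarith [ht.1]⟩
  have hpos : ∀ t ∈ Icc t₁ t₂, 0 < s + t₂ - t := fun t ht => hs.trans_le (hscale t ht).1
  have hq : HasPolyGrowthOn (Icc t₁ t₂)
      fun (_ : EuclideanSpace ℝ (Fin n)) t => 1 / (2 * (s + t₂ - t)) := by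
    refine .of_bounded (C := 1 / (2 * s)) (fun t _ => continuous_const) fun x t ht => ?_
    rw [Real.norm_of_nonneg (by have := hpos t ht; positivity)]
    gcongr
    exact (hscale t ht).1
  have he := h.hasPolyGrowthOn_energyDensity hF.continuous
  have hrate := h.hasPolyGrowthOn_weightedEnergyRate hF hq y
  have hM : 0 < s + (t₂ - t₁) := by linarith
  obtain ⟨B, hB, he_le⟩ := he.exists_integrable_bound_gaussianDensity_smul y hs hM
  obtain ⟨B', hB', hrate_le⟩ := hrate.exists_integrable_bound_gaussianDensity_smul y hs hM
  have hmono := integral_le_integral_of_deriv_nonpos ht hB hB'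
    (fun t ht x => he_le _ (hscale t ht) t ht x) (fun t ht x => hrate_le _ (hscale t ht) t ht x)
    (fun t ht => (he.integrable_gaussianDensity_smul y (hpos t ht) ht).aestronglyMeasurable)
    (fun t ht => (hrate.integrable_gaussianDensity_smul y (hpos t ht) ht).aestronglyMeasurable)
    (fun x t ht => hasDerivAt_gaussianDensity_mul_energyDensity (hF.differentiable two_ne_zero)
      (h.contDiff.of_le (by norm_num)) y x (sub_pos.1 (hpos t ht)))
    (fun t ht => h.integral_gaussianDensity_mul_weightedEnergyRate_nonpos hF hε ht (hpos t ht)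
      (hdisc t ht))
  simpa only [smul_eq_mul, add_sub_cancel_right, add_sub_assoc] using hmono

end IsBoundedAllenCahnFlow

end WeightedEnergy

section EntropyMeasure

variable {n : ℕ}

lemma spaceLaplacian_eq_divergence_gradient {f : EuclideanSpace ℝ (Fin n) → ℝ}
    (hf : ContDiff ℝ 2 f) (x : EuclideanSpace ℝ (Fin n)) :
    spaceLaplacian n f x = divergence (∇ f) x := by
  have hD : DifferentiableAt ℝ (fderiv ℝ f) x :=
    (hf.fderiv_right le_rfl).differentiable one_ne_zero x
  rw [spaceLaplacian, divergence,
    LinearMap.trace_eq_sum_inner _ (EuclideanSpace.basisFun (Fin n) ℝ)]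
  refine Finset.sum_congr rfl fun i _ => ?_
  rw [EuclideanSpace.basisFun_apply, ContinuousLinearMap.coe_coe,
    real_inner_comm, inner_fderiv_gradient, fderiv_clm_apply hD (differentiableAt_const _)]
  simp

lemma lintegral_gaussianDensity_withDensity {e : EuclideanSpace ℝ (Fin n) → ℝ}
    (he : Measurable e) (he0 : 0 ≤ e) {y : EuclideanSpace ℝ (Fin n)} {s : ℝ} (hs : 0 ≤ s)
    (hint : Integrable fun x => gaussianDensity n y s x * e x) :
    ∫⁻ x, ENNReal.ofReal (gaussianDensity n y s x)
        ∂volume.withDensity (fun x => ENNReal.ofReal (e x))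
      = ENNReal.ofReal (∫ x, gaussianDensity n y s x * e x) := by
  have hρ := (contDiff_gaussianDensity y s).continuous.measurable
  rw [lintegral_withDensity_eq_lintegral_mul _ he.ennreal_ofReal hρ.ennreal_ofReal,
    ofReal_integral_eq_lintegral_ofReal hint
      (.of_forall fun x => mul_nonneg (gaussianDensity_nonneg y hs x) (he0 x))]
  refine lintegral_congr fun x => ?_
  rw [Pi.mul_apply, ← ENNReal.ofReal_mul (he0 x), mul_comm]

lemma energyDensity_nonneg_of_discrepancy_nonpos {E : Type*} [NormedAddCommGroup E]
    [InnerProductSpace ℝ E] [CompleteSpace E] {ε : ℝ} {F : ℝ → ℝ} {v : E → ℝ} {x : E} (hε : 0 ≤ ε)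
    (h : discrepancy ε F v x ≤ 0) : 0 ≤ energyDensity ε F v x := by
  have hgrad : 0 ≤ ε / 2 * ‖∇ v x‖ ^ 2 := by positivity
  unfold discrepancy at h
  unfold energyDensity
  linarith

lemma IsBoundedAllenCahnFlow.lintegral_gaussianDensity_withDensity {ε s t : ℝ} {F : ℝ → ℝ}
    {u : EuclideanSpace ℝ (Fin n) → ℝ → ℝ} {I : Set ℝ} (h : IsBoundedAllenCahnFlow ε F u I)
    (hF : Continuous F) (hε : 0 ≤ ε) (ht : t ∈ I)
    (hdisc : ∀ x, discrepancy ε F (fun x => u x t) x ≤ 0) (y : EuclideanSpace ℝ (Fin n))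
    (hs : 0 < s) :
    ∫⁻ x, ENNReal.ofReal (gaussianDensity n y s x)
        ∂volume.withDensity (fun x => ENNReal.ofReal (energyDensity ε F (fun x => u x t) x))
      = ENNReal.ofReal
        (∫ x, gaussianDensity n y s x * energyDensity ε F (fun x => u x t) x) :=
  have he := h.hasPolyGrowthOn_energyDensity hF
  AllenCahn.lintegral_gaussianDensity_withDensity (he.continuous t ht).measurable
    (fun x => energyDensity_nonneg_of_discrepancy_nonpos hε (hdisc x)) hs.le
    (he.integrable_gaussianDensity_smul y hs ht)

end EntropyMeasure

section DoubleWell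

/-- The standard double-well potential `F(r) = (1/2)(1 - r²)²` of the Allen–Cahn equation. -/
noncomputable def doubleWell (r : ℝ) : ℝ :=
  1 / 2 * (1 - r ^ 2) ^ 2

lemma contDiff_doubleWell {m : ℕ∞ω} : ContDiff ℝ m doubleWell := by
  unfold doubleWell
  fun_prop

lemma deriv_doubleWell (r : ℝ) : deriv doubleWell r = 2 * r * (r ^ 2 - 1) := by
  have h := (((hasDerivAt_pow 2 r).const_sub 1).pow 2).const_mul (1 / 2)
  rw [HasDerivAt.deriv (f := doubleWell) h]
  push_cast
  ring

end DoubleWell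

end AllenCahn

open AllenCahn in
theorem allen_cahn_local_entropy_monotone_general {n : ℕ} {ε t₁ t₂ : ℝ} {F : ℝ → ℝ}
    {u : EuclideanSpace ℝ (Fin n) → ℝ → ℝ} (hε : 0 < ε) (hF : ContDiff ℝ 2 F) (ht : t₁ ≤ t₂)
    (hu : IsBoundedAllenCahnFlow ε F u (Set.Icc t₁ t₂))
    (hdisc : ∀ t ∈ Set.Icc t₁ t₂, ∀ x, discrepancy ε F (fun x => u x t) x ≤ 0) (T : ℝ) :
    localEntropy n T
        (volume.withDensity fun x => ENNReal.ofReal (energyDensity ε F (fun x => u x t₂) x))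
      ≤ localEntropy n (T + (t₂ - t₁))
        (volume.withDensity fun x => ENNReal.ofReal (energyDensity ε F (fun x => u x t₁) x)) := by
  refine iSup_le fun y => iSup_le fun s => iSup_le fun hs => iSup_le fun hsT => ?_
  have hs' : 0 < s + (t₂ - t₁) := by linarith
  refine le_iSup_of_le y <| le_iSup_of_le (s + (t₂ - t₁)) <| le_iSup_of_le hs' <|
    le_iSup_of_le (by linarith) ?_
  rw [hu.lintegral_gaussianDensity_withDensity hF.continuous hε.le (Set.right_mem_Icc.2 ht)
      (hdisc t₂ (Set.right_mem_Icc.2 ht)) y hs,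
    hu.lintegral_gaussianDensity_withDensity hF.continuous hε.le (Set.left_mem_Icc.2 ht)
      (hdisc t₁ (Set.left_mem_Icc.2 ht)) y hs']
  exact ENNReal.ofReal_le_ofReal
    (hu.integral_gaussianDensity_mul_energyDensity_le hF hε hdisc ht hs y)

/-- Monotonicity of local entropy under the Allen–Cahn flow on `ℝⁿ` with nonpositive
discrepancy: for every `T > 0` and all `0 ≤ t₁ ≤ t₂`,
`λ^{(0,T)}(μ^{t₂}) ≤ λ^{(0,T+(t₂-t₁))}(μ^{t₁})`. -/
theorem allen_cahn_local_entropy_monotone (n : ℕ) (hn : 1 ≤ n) (ε : ℝ) (hε : 0 < ε)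
    (u : EuclideanSpace ℝ (Fin n) → ℝ → ℝ)
    (hsmooth : ContDiff ℝ (⊤ : ℕ∞) (fun p : EuclideanSpace ℝ (Fin n) × ℝ => u p.1 p.2))
    (hu1 : ∀ x t, |u x t| ≤ 1)
    (hpde : ∀ x, ∀ t, 0 ≤ t →
      deriv (u x) t = spaceLaplacian n (fun y => u y t) x
        - (1 / ε ^ 2) * (2 * u x t * ((u x t) ^ 2 - 1)))
    (hbnd : ∀ T > (0 : ℝ), ∃ C : ℝ, ∀ x, ∀ t ∈ Set.Icc (0 : ℝ) T,
      (∀ i ≤ 3, ‖iteratedFDeriv ℝ i (fun y => u y t) x‖ ≤ C) ∧ |deriv (u x) t| ≤ C)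
    (μ : ℝ → Measure (EuclideanSpace ℝ (Fin n)))
    (hμ : ∀ t, μ t = volume.withDensity (fun x =>
      ENNReal.ofReal ((ε / 2) * ‖gradient (fun y => u y t) x‖ ^ 2
        + (1 / ε) * ((1 / 2) * (1 - (u x t) ^ 2) ^ 2))))
    (hdisc : ∀ x, ∀ t, 0 ≤ t →
      (ε / 2) * ‖gradient (fun y => u y t) x‖ ^ 2
        ≤ (1 / ε) * ((1 / 2) * (1 - (u x t) ^ 2) ^ 2)) :
    ∀ T > (0 : ℝ), ∀ t₁ t₂ : ℝ, 0 ≤ t₁ → t₁ ≤ t₂ →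
      localEntropy n T (μ t₂) ≤ localEntropy n (T + (t₂ - t₁)) (μ t₁) := by
  intro T _ t₁ t₂ ht₁ ht
  have hpos : ∀ t ∈ Set.Icc t₁ t₂, 0 ≤ t := fun t h => ht₁.trans h.1
  have hu : AllenCahn.IsBoundedAllenCahnFlow ε AllenCahn.doubleWell u (Set.Icc t₁ t₂) := by
    refine ⟨contDiff_infty.1 hsmooth 3, fun t h x => ?_, ?_⟩
    · rw [hpde x t (hpos t h), AllenCahn.deriv_doubleWell,
        AllenCahn.spaceLaplacian_eq_divergence_gradient
          (AllenCahn.contDiff_space_slice (contDiff_infty.1 hsmooth 2) t)]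
    · obtain ⟨C, hC⟩ := hbnd (t₂ + 1) (by linarith)
      exact ⟨C, fun x t h => (hC x t ⟨hpos t h, by linarith [h.2]⟩).1⟩
  rw [hμ, hμ]
  exact allen_cahn_local_entropy_monotone_general hε AllenCahn.contDiff_doubleWell ht hu
    (fun t h x => sub_nonpos.2 (hdisc x t (hpos t h))) T
end
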